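/- arXiv:2412.10398 — 3 statements merged into one kernel-verified Lean document; each statement's English description precedes it below -/
import Mathlib

section
/- Let A and B be positive invertible bounded operators on a complex Hilbert space with mI ≤ A ≤ MI and mI ≤ B ≤ MI for some scalars 0 < m < M, put h := M/m, and let 0 ≤ t ≤ 1/2. Then K(h, 2(1−t))^{−1} K(h, 1/(1−t))^{t−1} ‖A sp_t B‖ ≤ ‖A ♯_t B‖ ≤ ‖A sp_t B‖, where ‖·‖ is the operator norm. -/
noncomputable section

variable {H : Type*} [NormedAddCommGroup H] [InnerProductSpace ℂ H] [CompleteSpace H]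

/-- Real power of a bounded operator, via the continuous functional calculus. -/
def opPow (A : H →L[ℂ] H) (t : ℝ) : H →L[ℂ] H := cfc (fun x : ℝ => x ^ t) A

/-- The logarithm of a bounded operator, via the continuous functional calculus. -/
def opLog (A : H →L[ℂ] H) : H →L[ℂ] H := cfc Real.log A

/-- The exponential of a bounded operator, via the continuous functional calculus. -/
def opExp (A : H →L[ℂ] H) : H →L[ℂ] H := cfc Real.exp A

/-- The weighted geometric mean `A ♯ₜ B = A^(1/2) (A^(-1/2) B A^(-1/2))^t A^(1/2)`. -/
def geoMean (A B : H →L[ℂ] H) (t : ℝ) : H →L[ℂ] H :=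
  opPow A (1/2) * opPow (opPow A (-(1/2)) * B * opPow A (-(1/2))) t * opPow A (1/2)

/-- The weighted spectral geometric mean `A spₜ B = (A⁻¹ ♯ B)^t A (A⁻¹ ♯ B)^t`,
where `A ♯ B` is the (unweighted, `t = 1/2`) geometric mean. -/
def spMean (A B : H →L[ℂ] H) (t : ℝ) : H →L[ℂ] H :=
  opPow (geoMean (Ring.inverse A) B (1/2)) t * A * opPow (geoMean (Ring.inverse A) B (1/2)) t

/-- The generalized Kantorovich constant `K(m, M, p)`. -/
def Kan (m M p : ℝ) : ℝ :=
  ((m * M ^ p - M * m ^ p) / ((p - 1) * (M - m))) *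
    (((p - 1) / p) * ((M ^ p - m ^ p) / (m * M ^ p - M * m ^ p))) ^ p

/-- The generalized Kantorovich constant `K(h, p)` (one-parameter form). -/
def Kan' (h p : ℝ) : ℝ :=
  ((h ^ p - h) / ((p - 1) * (h - 1))) * (((p - 1) / p) * ((h ^ p - 1) / (h ^ p - h))) ^ p

lemma kan_pos (h p : ℝ) (hh : 1 < h) (hp : 1 < p) : 0 < Kan' h p := by
  have h1 : h < h ^ p := by
    simpa using Real.rpow_lt_rpow_of_exponent_lt hh hp
  unfold Kan'
  have a1 : 0 < h ^ p - h := by linarith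
  have a2 : 0 < h ^ p - 1 := by linarith
  have a3 : 0 < p - 1 := by linarith
  have a4 : 0 < h - 1 := by linarith
  have a5 : 0 < p := by linarith
  positivity

lemma kan_tangent (h p w : ℝ) (hh : 1 < h) (hp : 1 < p) (hw : 0 < w) :
    (h ^ p - 1) / (h - 1) * w - (h ^ p - h) / (h - 1) ≤ Kan' h p * w ^ p := by
  have h1 : h < h ^ p := by
    simpa using Real.rpow_lt_rpow_of_exponent_lt hh hp
  have a1 : 0 < h ^ p - h := by linarith
  have a2 : 0 < h ^ p - 1 := by linarith
  have a3 : 0 < p - 1 := by linarith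
  have a4 : 0 < h - 1 := by linarith
  have a5 : 0 < p := by linarith
  unfold Kan'
  set q := ((p - 1) / p) * ((h ^ p - 1) / (h ^ p - h)) with hq
  have hq0 : 0 < q := by positivity
  rw [mul_assoc, ← Real.mul_rpow hq0.le hw.le]
  have hb := one_add_mul_self_le_rpow_one_add (s := q * w - 1)
    (by have := mul_pos hq0 hw; linarith) hp.le
  rw [add_sub_cancel] at hb
  refine le_trans (le_of_eq ?_) (mul_le_mul_of_nonneg_left hb (by positivity))
  rw [hq]
  field_simp
  ring

lemma kan_chord (h p w : ℝ) (hh : 1 < h) (hp : 1 < p) (hw : 1 ≤ w) (hw2 : w ≤ h) :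
    w ^ p ≤ (h ^ p - 1) / (h - 1) * w - (h ^ p - h) / (h - 1) := by
  have a4 : 0 < h - 1 := by linarith
  have hc0 := (convexOn_rpow hp.le).2
  have hc := @hc0 1 (by simp) h (by simp; linarith)
    ((h - w) / (h - 1)) ((w - 1) / (h - 1)) (div_nonneg (by linarith) a4.le)
    (div_nonneg (by linarith) a4.le) (by field_simp; ring)
  simp only [smul_eq_mul, Real.one_rpow] at hc
  have e1 : (h - w) / (h - 1) * 1 + (w - 1) / (h - 1) * h = w := by field_simp; ring
  rw [e1] at hc
  refine hc.trans (le_of_eq ?_)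
  field_simp
  ring

lemma kan_exists (h p n : ℝ) (hh : 1 < h) (hp : 1 < p) (hn : 0 < n) :
    ∃ γ δ : ℝ, 0 ≤ γ ∧ (∀ z, n ≤ z → z ≤ h * n → z ^ p ≤ γ * z + δ) ∧
      ∀ z, 0 < z → γ * z + δ ≤ Kan' h p * z ^ p := by
  have h1 : h < h ^ p := by
    simpa using Real.rpow_lt_rpow_of_exponent_lt hh hp
  have a2 : 0 < h ^ p - 1 := by linarith
  have a4 : 0 < h - 1 := by linarith
  have hnp : 0 < n ^ p := by positivity
  have key : ∀ z, n ^ p * ((h ^ p - 1) / (h - 1)) / n * z + -(n ^ p * ((h ^ p - h) / (h - 1)))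
      = n ^ p * ((h ^ p - 1) / (h - 1) * (z / n) - (h ^ p - h) / (h - 1)) := by
    intro z; field_simp; ring
  have key2 : ∀ z, 0 < z → z ^ p = n ^ p * (z / n) ^ p := by
    intro z hz
    rw [← Real.mul_rpow hn.le (by positivity)]
    congr 1; field_simp
  refine ⟨n ^ p * ((h ^ p - 1) / (h - 1)) / n, -(n ^ p * ((h ^ p - h) / (h - 1))),
    by positivity, ?_, ?_⟩
  · intro z hz1 hz2
    have hz : 0 < z := by linarith
    rw [key, key2 z hz]
    refine mul_le_mul_of_nonneg_left (kan_chord h p _ hh hp ?_ ?_) hnp.le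
    · rwa [le_div_iff₀ hn, one_mul]
    · rwa [div_le_iff₀ hn]
  · intro z hz
    rw [key, key2 z hz, mul_left_comm]
    exact mul_le_mul_of_nonneg_left (kan_tangent h p _ hh hp (by positivity)) hnp.le

section Abstract

variable {R : Type*} [CStarAlgebra R] [PartialOrder R] [StarOrderedRing R]

lemma sp_rpow {a : R} (ha : IsStrictlyPositive a) (x : ℝ) : IsStrictlyPositive (a ^ x) :=
  (ha.isUnit.cfcRpow x ha.nonneg).isStrictlyPositive CFC.rpow_nonneg

lemma rpow_merge {a : R} (ha : IsStrictlyPositive a) (x y : ℝ) (z : R) :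
    a ^ x * (a ^ y * z) = a ^ (x + y) * z := by
  rw [← mul_assoc, ← CFC.rpow_add ha.isUnit]

lemma rpow_merge' {a : R} (ha : IsStrictlyPositive a) (x y : ℝ) :
    a ^ x * a ^ y = a ^ (x + y) := (CFC.rpow_add ha.isUnit).symm

lemma rpow_sa (a : R) (x : ℝ) : IsSelfAdjoint (a ^ x) := IsSelfAdjoint.of_nonneg CFC.rpow_nonneg

lemma smul_rpow_eq_cfc {a : R} (ha : IsStrictlyPositive a) (c w : ℝ) :
    c • a ^ w = cfc (fun r : ℝ => c * r ^ w) a := by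
  have hc : ContinuousOn (fun r : ℝ => r ^ w) (spectrum ℝ a) :=
    ContinuousOn.rpow_const continuousOn_id fun r hr => Or.inl (ha.spectrum_pos hr).ne'
  rw [CFC.rpow_eq_cfc_real ha.nonneg, cfc_const_mul c _ a hc]

lemma smul_rpow_rpow {a : R} (ha : IsStrictlyPositive a) {c : ℝ} (hc : 0 < c) (w y : ℝ) :
    (c • a ^ w) ^ y = c ^ y • a ^ (w * y) := by
  have hcont : ContinuousOn (fun r : ℝ => c * r ^ w) (spectrum ℝ a) :=
    (ContinuousOn.rpow_const continuousOn_id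
      fun r hr => Or.inl (ha.spectrum_pos hr).ne').const_mul c
  rw [smul_rpow_eq_cfc ha, smul_rpow_eq_cfc ha, CFC.cfc_rpow (fun r hr => ?_) hcont
    ha.isSelfAdjoint]
  · refine cfc_congr fun r hr => ?_
    have := ha.spectrum_pos hr
    rw [Real.mul_rpow hc.le (by positivity), ← Real.rpow_mul this.le]
  · have := ha.spectrum_pos hr
    positivity

lemma rpow_rpow_sp {a : R} (ha : IsStrictlyPositive a) (w y : ℝ) :
    (a ^ w) ^ y = a ^ (w * y) := by
  simpa using smul_rpow_rpow ha one_pos w y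

lemma smul_rpow_sp {a : R} (ha : IsStrictlyPositive a) {c : ℝ} (hc : 0 < c) (y : ℝ) :
    (c • a) ^ y = c ^ y • a ^ y := by
  have := smul_rpow_rpow ha hc 1 y
  rwa [CFC.rpow_one a ha.nonneg, one_mul] at this

lemma polar_rpow {T : R} (hT : IsUnit T) (s : ℝ) :
    (T * star T) ^ s = T * (star T * T) ^ (s - 1) * star T := by
  have hp : IsStrictlyPositive (star T * T) :=
    (hT.star.mul hT).isStrictlyPositive (star_mul_self_nonneg T)
  set P := star T * T with hP
  let U : R := T * P ^ (-(1/2) : ℝ)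
  have hsU : star U = P ^ (-(1/2) : ℝ) * star T := by
    simp only [U, star_mul, (rpow_sa P _).star_eq]
  have h1 : star U * U = 1 := by
    rw [hsU]
    have : P ^ (-(1/2) : ℝ) * star T * (T * P ^ (-(1/2) : ℝ))
      = P ^ (-(1/2) : ℝ) * P * P ^ (-(1/2) : ℝ) := by simp only [hP, mul_assoc]
    rw [this, CFC.conjugate_rpow_neg_one_half P hp]
  have hUu : IsUnit U := hT.mul (sp_rpow hp _).isUnit
  have h2 : U * star U = 1 := by
    obtain ⟨u, hu⟩ := hUu
    rw [← hu] at h1 ⊢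
    have : star (u : R) = (u⁻¹ : Rˣ) := (Units.inv_eq_of_mul_eq_one_left h1).symm
    rw [this]; simp
  let V : unitary R := ⟨U, h1, h2⟩
  have h3 : Unitary.conjStarAlgAut ℂ R V P = T * star T := by
    rw [Unitary.conjStarAlgAut_apply]
    change U * P * star U = _
    rw [hsU]
    have : U * P * (P ^ (-(1/2) : ℝ) * star T) =
      T * (P ^ (-(1/2) : ℝ) * P * P ^ (-(1/2) : ℝ)) * star T := by simp only [U, mul_assoc]
    rw [this, CFC.conjugate_rpow_neg_one_half P hp, mul_one]
  have hcont : ContinuousOn (fun r : ℝ => r ^ s) (spectrum ℝ P) :=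
    ContinuousOn.rpow_const continuousOn_id fun r hr => Or.inl (hp.spectrum_pos hr).ne'
  have h4 : Unitary.conjStarAlgAut ℂ R V (cfc (fun r : ℝ => r ^ s) P)
      = cfc (fun r : ℝ => r ^ s) (Unitary.conjStarAlgAut ℂ R V P) := by
    refine StarAlgHomClass.map_cfc (S := ℂ) (Unitary.conjStarAlgAut ℂ R V) _ P hcont ?_ hp.isSelfAdjoint ?_
    · have : (fun x => Unitary.conjStarAlgAut ℂ R V x) = fun x => (V : R) * x * star (V : R) := rfl
      change Continuous (fun x => Unitary.conjStarAlgAut ℂ R V x)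
      rw [this]; fun_prop
    · rw [h3]; exact IsSelfAdjoint.mul_star_self T
  rw [h3, ← CFC.rpow_eq_cfc_real hp.nonneg, ← CFC.rpow_eq_cfc_real (mul_star_self_nonneg T),
    Unitary.conjStarAlgAut_apply] at h4
  rw [← h4]
  change U * P ^ s * star U = _
  rw [hsU]
  simp only [U, mul_assoc]
  rw [rpow_merge hp, rpow_merge hp]
  ring_nf

def gm (a b : R) (t : ℝ) : R :=
  a ^ (1/2 : ℝ) * (a ^ (-(1/2) : ℝ) * b * a ^ (-(1/2) : ℝ)) ^ t * a ^ (1/2 : ℝ)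

lemma sp_conj {a b : R} (ha : IsStrictlyPositive a) (hb : IsStrictlyPositive b) (x : ℝ) :
    IsStrictlyPositive (a ^ x * b * a ^ x) :=
  IsStrictlyPositive.conjugate_of_isUnit_of_isSelfAdjoint _ _ (sp_rpow ha x).isUnit (rpow_sa a x) hb

lemma gm_sp {a b : R} (ha : IsStrictlyPositive a) (hb : IsStrictlyPositive b) (t : ℝ) :
    IsStrictlyPositive (gm a b t) := sp_conj ha (sp_rpow (sp_conj ha hb _) _) _

lemma rpow_neg_one_eq {a b : R} (ha : IsStrictlyPositive a) (h : a * b = 1) :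
    a ^ (-1 : ℝ) = b := by
  have h1 : a ^ (-1 : ℝ) * a = 1 := by
    have := CFC.rpow_neg_mul_rpow (a := a) 1 ha
    rwa [CFC.rpow_one a ha.nonneg] at this
  calc a ^ (-1 : ℝ) = a ^ (-1 : ℝ) * (a * b) := by rw [h, mul_one]
    _ = b := by rw [← mul_assoc, h1, one_mul]

lemma gm_symm {a b : R} (ha : IsStrictlyPositive a) (hb : IsStrictlyPositive b) (t : ℝ) :
    gm a b t = gm b a (1 - t) := by
  have hT : IsUnit (b ^ (-(1/2) : ℝ) * a ^ (1/2 : ℝ)) :=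
    (sp_rpow hb _).isUnit.mul (sp_rpow ha _).isUnit
  have h := polar_rpow hT (1 - t)
  have hX := sp_conj ha hb (-(1/2))
  have e1 : b ^ (-(1/2) : ℝ) * a ^ (1/2 : ℝ) * star (b ^ (-(1/2) : ℝ) * a ^ (1/2 : ℝ))
      = b ^ (-(1/2) : ℝ) * a * b ^ (-(1/2) : ℝ) := by
    rw [star_mul, (rpow_sa b _).star_eq, (rpow_sa a _).star_eq]
    simp only [mul_assoc]
    rw [rpow_merge ha]
    norm_num
    rw [CFC.rpow_one a ha.nonneg]
  have e2 : star (b ^ (-(1/2) : ℝ) * a ^ (1/2 : ℝ)) * (b ^ (-(1/2) : ℝ) * a ^ (1/2 : ℝ))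
      = (a ^ (-(1/2) : ℝ) * b * a ^ (-(1/2) : ℝ)) ^ (-1 : ℝ) := by
    symm
    apply rpow_neg_one_eq hX
    rw [star_mul, (rpow_sa b _).star_eq, (rpow_sa a _).star_eq]
    nth_rw 1 [← CFC.rpow_one b hb.nonneg]
    simp only [mul_assoc]
    rw [rpow_merge ha, neg_add_cancel, CFC.rpow_zero a ha.nonneg, one_mul, rpow_merge hb,
      rpow_merge hb]
    norm_num
    rw [CFC.rpow_zero b hb.nonneg, one_mul, rpow_merge' ha, neg_add_cancel,
      CFC.rpow_zero a ha.nonneg]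
  rw [e1, e2, rpow_rpow_sp hX, star_mul, (rpow_sa b _).star_eq, (rpow_sa a _).star_eq] at h
  unfold gm
  rw [h]
  simp only [mul_assoc]
  rw [rpow_merge hb, rpow_merge' hb]
  norm_num
  rw [CFC.rpow_zero b hb.nonneg, one_mul, mul_one]

lemma gm_mono {a b c : R} (t : ℝ) (ht : t ∈ Set.Icc (0:ℝ) 1) (hbc : b ≤ c) :
    gm a b t ≤ gm a c t := by
  unfold gm
  exact conjugate_le_conjugate_of_nonneg (CFC.rpow_le_rpow ht
    (conjugate_le_conjugate_of_nonneg hbc CFC.rpow_nonneg)) CFC.rpow_nonneg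

/-- move a conjugation to the other side -/
lemma conj_le_iff {x a : R} (hx : IsStrictlyPositive x) (c s w : ℝ)
    (h : x ^ s * a * x ^ s ≤ c • x ^ w) (v : ℝ) (hv : v = w - 2 * s) : a ≤ c • x ^ v := by
  have := conjugate_le_conjugate_of_nonneg h (CFC.rpow_nonneg (a := x) (y := -s))
  have e : x ^ (-s) * (x ^ s * a * x ^ s) * x ^ (-s) = a := by
    simp only [mul_assoc]
    rw [rpow_merge' hx, rpow_merge hx, neg_add_cancel, add_neg_cancel, CFC.rpow_zero x hx.nonneg,
      mul_one, one_mul]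
  rw [e, mul_smul_comm, smul_mul_assoc, rpow_merge' hx, rpow_merge' hx] at this
  convert! this using 3
  rw [hv]; ring

lemma conj_le' {x a : R} (hx : IsStrictlyPositive x) (c s w : ℝ)
    (h : a ≤ c • x ^ w) (v : ℝ) (hv : v = w + 2 * s) : x ^ s * a * x ^ s ≤ c • x ^ v := by
  have := conjugate_le_conjugate_of_nonneg h (CFC.rpow_nonneg (a := x) (y := s))
  rw [mul_smul_comm, smul_mul_assoc, rpow_merge' hx, rpow_merge' hx] at this
  convert! this using 3
  rw [hv]; ring

lemma upper_le {a b x : R} (ha : IsStrictlyPositive a) (hb : IsStrictlyPositive b)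
    (hx : IsStrictlyPositive x) (hxab : x * a * x = b) (t μ : ℝ) (hμ : 0 < μ)
    (ht : t ∈ Set.Icc (0:ℝ) 1) (h : x ^ t * a * x ^ t ≤ μ • (1 : R)) :
    gm a b t ≤ μ • (1 : R) := by
  have h0 : x ^ t * a * x ^ t ≤ μ • x ^ (0 : ℝ) := by rwa [CFC.rpow_zero x hx.nonneg]
  have h1 : a ≤ μ • x ^ (-2 * t) := conj_le_iff hx _ _ _ h0 _ (by ring)
  have h2 : b ≤ μ • x ^ (2 - 2 * t) := by
    have := conj_le' hx μ 1 _ h1 (2 - 2 * t) (by ring)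
    rwa [CFC.rpow_one x hx.nonneg, hxab] at this
  have hc : IsStrictlyPositive (μ • x ^ (2 - 2 * t)) := (sp_rpow hx _).smul hμ
  calc gm a b t ≤ gm a (μ • x ^ (2 - 2 * t)) t := gm_mono t ht h2
    _ = gm (μ • x ^ (2 - 2 * t)) a (1 - t) := gm_symm ha hc t
    _ ≤ gm (μ • x ^ (2 - 2 * t)) (μ • x ^ (-2 * t)) (1 - t) :=
        gm_mono _ ⟨by linarith [ht.2], by linarith [ht.1]⟩ h1
    _ = μ • (1 : R) := by
      unfold gm
      simp only [smul_rpow_rpow hx hμ, mul_smul_comm, smul_mul_assoc, rpow_merge' hx, smul_smul]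
      rw [smul_rpow_rpow hx (by positivity), mul_smul_comm, smul_mul_assoc, rpow_merge' hx,
        rpow_merge' hx, smul_smul]
      rw [← Real.rpow_one μ]
      simp only [← Real.rpow_mul hμ.le, ← Real.rpow_add hμ]
      rw [show (2 - 2 * t) * (1 / 2) + (((2 - 2 * t) * -(1/2) + -2 * t + (2 - 2 * t) * -(1/2)) * (1 - t)) + (2 - 2 * t) * (1 / 2) = 0 by ring, CFC.rpow_zero x hx.nonneg]
      congr 2
      ring

lemma furuta {b C : R} (hb : IsStrictlyPositive b) (hC : IsStrictlyPositive C) (m h c r p : ℝ)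
    (hm : 0 < m) (hh : 1 < h) (hc : 0 < c) (hr : r ∈ Set.Icc (0:ℝ) 1) (hp : 1 < p)
    (hs : ∀ x ∈ spectrum ℝ b, m ≤ x ∧ x ≤ h * m) (hle : C ≤ c • b ^ (-r)) :
    C ^ p ≤ (Kan' h p * c ^ p) • b ^ (-(r * p)) := by
  have hK := kan_pos h p hh hp
  have hF := sp_rpow hC (-1)
  obtain ⟨γ, δ, hγ, hch, htan⟩ := kan_exists h p (c⁻¹ * m ^ r) hh hp (by positivity)
  have hE : c⁻¹ • b ^ r ≤ C ^ (-1 : ℝ) := by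
    have := CStarAlgebra.rpow_neg_one_le_rpow_neg_one hle hC
    rwa [smul_rpow_rpow hb hc, Real.rpow_neg_one, mul_neg_one, neg_neg] at this
  have cont : ∀ w : ℝ, ContinuousOn (fun r : ℝ => r ^ w) (spectrum ℝ b) := fun w =>
    ContinuousOn.rpow_const (f := fun x : ℝ => x) continuousOn_id fun r hr => Or.inl (hb.spectrum_pos hr).ne'
  have contF : ∀ w : ℝ, ContinuousOn (fun r : ℝ => r ^ w) (spectrum ℝ (C ^ (-1 : ℝ))) := fun w =>
    ContinuousOn.rpow_const (f := fun x : ℝ => x) continuousOn_id fun r hr => Or.inl (hF.spectrum_pos hr).ne'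
  have h1 : (c⁻¹ ^ p) • b ^ (r * p) ≤ γ • (c⁻¹ • b ^ r) + algebraMap ℝ R δ := by
    have e : γ • (c⁻¹ • b ^ r) + algebraMap ℝ R δ
        = cfc (fun x : ℝ => (γ * c⁻¹) * x ^ r + δ) b := by
      rw [cfc_add_const δ _ b ((cont r).const_mul _) hb.isSelfAdjoint, smul_smul,
        smul_rpow_eq_cfc hb]
    rw [e, smul_rpow_eq_cfc hb]
    refine cfc_mono (fun x hx => ?_) ((cont _).const_mul _)
      (((cont _).const_mul _).add continuousOn_const)
    have hx0 := hb.spectrum_pos hx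
    obtain ⟨hx1, hx2⟩ := hs x hx
    rw [Real.rpow_mul hx0.le, ← Real.mul_rpow (by positivity) (by positivity), mul_assoc]
    apply hch
    · have := Real.rpow_le_rpow hm.le hx1 hr.1
      gcongr
    · have := Real.rpow_le_rpow hx0.le hx2 hr.1
      rw [Real.mul_rpow (by linarith) hm.le] at this
      have h2 : h ^ r ≤ h := by
        simpa using Real.rpow_le_rpow_of_exponent_le hh.le hr.2
      calc c⁻¹ * x ^ r ≤ c⁻¹ * (h ^ r * m ^ r) := by gcongr
        _ ≤ c⁻¹ * (h * m ^ r) := by gcongr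
        _ = _ := by ring
  have h2 : γ • (c⁻¹ • b ^ r) + algebraMap ℝ R δ ≤ γ • C ^ (-1 : ℝ) + algebraMap ℝ R δ := by
    gcongr
  have h3 : γ • C ^ (-1 : ℝ) + algebraMap ℝ R δ ≤ Kan' h p • C ^ (-p) := by
    have e : γ • C ^ (-1 : ℝ) + algebraMap ℝ R δ
        = cfc (fun x : ℝ => γ * x ^ (1:ℝ) + δ) (C ^ (-1 : ℝ)) := by
      rw [cfc_add_const δ _ _ ((contF 1).const_mul _) hF.isSelfAdjoint, ← smul_rpow_eq_cfc hF,
        CFC.rpow_one _ hF.nonneg]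
    have e2 : Kan' h p • C ^ (-p) = Kan' h p • (C ^ (-1 : ℝ)) ^ p := by
      rw [rpow_rpow_sp hC]; simp
    rw [e, e2, smul_rpow_eq_cfc hF]
    refine cfc_mono (fun x hx => ?_) (((contF _).const_mul _).add continuousOn_const)
      ((contF _).const_mul _)
    simpa using htan x (hF.spectrum_pos hx)
  have h4 := CStarAlgebra.rpow_neg_one_le_rpow_neg_one (h1.trans (h2.trans h3))
    ((sp_rpow hb _).smul (by positivity))
  rw [smul_rpow_rpow hb (by positivity), smul_rpow_rpow hC hK] at h4
  have h5 := smul_le_smul_of_nonneg_left h4 hK.le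
  rw [smul_smul, smul_smul] at h5
  have e1 : Kan' h p * Kan' h p ^ (-1 : ℝ) = 1 := by
    rw [Real.rpow_neg_one]; exact mul_inv_cancel₀ hK.ne'
  have e2 : (c⁻¹ ^ p) ^ (-1 : ℝ) = c ^ p := by
    rw [Real.rpow_neg_one, Real.inv_rpow hc.le, inv_inv]
  rw [e1, e2, one_smul] at h5
  simpa using h5

lemma lower_le {a b y : R} (ha : IsStrictlyPositive a) (hb : IsStrictlyPositive b)
    (hy : IsStrictlyPositive y) (hyab : y * b * y = a) (m h t l : ℝ)
    (hm : 0 < m) (hh : 1 < h) (hl : 0 < l)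
    (hs : ∀ x ∈ spectrum ℝ b, m ≤ x ∧ x ≤ h * m) (ht0 : 0 < t) (ht1 : t < 1/2)
    (hle : gm a b t ≤ l • (1 : R)) :
    y ^ (1 - t) * b * y ^ (1 - t) ≤
      (Kan' h (2 * (1 - t)) * Kan' h (1 / (1 - t)) ^ (1 - t) * l) • (1 : R) := by
  have hs0 : 0 < 1 - t := by linarith
  have hp1 : 1 < 1 / (1 - t) := by rw [lt_div_iff₀ hs0]; linarith
  have hp2 : 1 < 2 * (1 - t) := by linarith
  have hK1 := kan_pos h _ hh hp1
  have hK2 := kan_pos h _ hh hp2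
  have hbab := sp_conj hb ha (-(1/2))
  rw [gm_symm ha hb] at hle
  have h1 : (b ^ (-(1/2) : ℝ) * a * b ^ (-(1/2) : ℝ)) ^ (1 - t) ≤ l • b ^ (-1 : ℝ) := by
    refine conj_le_iff hb l (1/2) 0 ?_ _ (by norm_num)
    rwa [CFC.rpow_zero b hb.nonneg]
  have h2 := furuta hb (sp_rpow hbab _) m h l 1 _ hm hh hl ⟨zero_le_one, le_rfl⟩ hp1 hs h1
  rw [rpow_rpow_sp hbab, mul_one_div_cancel hs0.ne', CFC.rpow_one _ hbab.nonneg, one_mul] at h2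
  set c := Kan' h (1 / (1 - t)) * l ^ (1 / (1 - t)) with hc
  have hc0 : 0 < c := by positivity
  have h3 : a ≤ c • b ^ (1 - 1 / (1 - t)) := conj_le_iff hb _ _ _ h2 _ (by ring)
  have h4 := conj_le' hb c (1/2) _ h3 (2 - 1 / (1 - t)) (by ring)
  have hbyb := sp_conj hb hy (1/2)
  have h5 := CFC.rpow_le_rpow (p := 1/2) ⟨by norm_num, by norm_num⟩ h4
  have e5 : b ^ (1/2 : ℝ) * a * b ^ (1/2 : ℝ) = (b ^ (1/2 : ℝ) * y * b ^ (1/2 : ℝ)) ^ (2 : ℝ) := by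
    have e2 := rpow_merge' hbyb 1 1
    rw [CFC.rpow_one _ hbyb.nonneg, one_add_one_eq_two] at e2
    rw [← e2, ← hyab]
    simp only [mul_assoc]
    rw [rpow_merge hb]
    norm_num
    rw [CFC.rpow_one _ hb.nonneg]
  rw [e5, rpow_rpow_sp hbyb, smul_rpow_rpow hb hc0] at h5
  norm_num at h5
  rw [CFC.rpow_one _ hbyb.nonneg] at h5
  have h6 : y ≤ c ^ (1/2 : ℝ) • b ^ (-(1 / (2 * (1 - t)))) := by
    refine conj_le_iff hb _ (1/2) _ (by norm_num; exact h5) _ ?_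
    field_simp
    ring
  have h7 := furuta hb hy m h _ (1 / (2 * (1 - t))) (2 * (1 - t)) hm hh (by positivity)
    ⟨by positivity, by rw [div_le_one (by linarith)]; linarith⟩ hp2 hs h6
  rw [div_mul_cancel₀ _ (by linarith), ← Real.rpow_mul hc0.le] at h7
  have ec : c ^ (1 / 2 * (2 * (1 - t))) = Kan' h (1 / (1 - t)) ^ (1 - t) * l := by
    rw [show 1 / 2 * (2 * (1 - t)) = 1 - t by ring, hc, Real.mul_rpow hK1.le (by positivity),
      ← Real.rpow_mul hl.le, one_div_mul_cancel hs0.ne', Real.rpow_one]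
  rw [ec, ← mul_assoc] at h7
  set κ := Kan' h (2 * (1 - t)) * Kan' h (1 / (1 - t)) ^ (1 - t) * l with hκ
  have hκ0 : 0 < κ := by positivity
  have h8 := CStarAlgebra.rpow_neg_one_le_rpow_neg_one h7 (sp_rpow hy _)
  rw [smul_rpow_rpow hb hκ0, rpow_rpow_sp hy] at h8
  have h9 := smul_le_smul_of_nonneg_left h8 hκ0.le
  rw [smul_smul, Real.rpow_neg_one, mul_inv_cancel₀ hκ0.ne', one_smul] at h9
  norm_num at h9
  rw [CFC.rpow_one _ hb.nonneg] at h9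
  have h10 := conj_le' hy κ (1 - t) _ h9 0 (by ring)
  rwa [CFC.rpow_zero _ hy.nonneg] at h10

lemma riccati {a b : R} (ha : IsStrictlyPositive a) (hb : IsStrictlyPositive b) :
    gm (a ^ (-1 : ℝ)) b (1/2) * a * gm (a ^ (-1 : ℝ)) b (1/2) = b := by
  unfold gm
  have hX := sp_conj ha hb (1/2)
  simp only [rpow_rpow_sp ha]
  rw [show (-1 : ℝ) * -(1/2) = 1/2 by norm_num, show (-1 : ℝ) * (1/2) = -(1/2) by norm_num]
  have hS : (a ^ (1/2 : ℝ) * b * a ^ (1/2 : ℝ)) ^ (1/2 : ℝ)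
      * (a ^ (1/2 : ℝ) * b * a ^ (1/2 : ℝ)) ^ (1/2 : ℝ) = a ^ (1/2 : ℝ) * b * a ^ (1/2 : ℝ) := by
    rw [rpow_merge' hX, add_halves, CFC.rpow_one _ hX.nonneg]
  generalize (a ^ (1/2 : ℝ) * b * a ^ (1/2 : ℝ)) ^ (1/2 : ℝ) = S at hS ⊢
  have e1 : a ^ (-(1/2) : ℝ) * a ^ (1/2 : ℝ) = 1 := CFC.rpow_neg_mul_rpow _ ha
  have e2 : a ^ (1/2 : ℝ) * a ^ (-(1/2) : ℝ) = 1 := CFC.rpow_mul_rpow_neg _ ha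
  calc a ^ (-(1/2) : ℝ) * S * a ^ (-(1/2) : ℝ) * a * (a ^ (-(1/2) : ℝ) * S * a ^ (-(1/2) : ℝ))
      = a ^ (-(1/2) : ℝ) * S * (a ^ (-(1/2) : ℝ) * a * a ^ (-(1/2) : ℝ)) * S
        * a ^ (-(1/2) : ℝ) := by simp only [mul_assoc]
    _ = a ^ (-(1/2) : ℝ) * (S * S) * a ^ (-(1/2) : ℝ) := by
        rw [CFC.conjugate_rpow_neg_one_half a ha, mul_one]; simp only [mul_assoc]
    _ = (a ^ (-(1/2) : ℝ) * a ^ (1/2 : ℝ)) * b * (a ^ (1/2 : ℝ) * a ^ (-(1/2) : ℝ)) := by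
        rw [hS]; simp only [mul_assoc]
    _ = b := by rw [e1, e2, one_mul, mul_one]

lemma norm_ineqs {a b : R} (m h t : ℝ) (ha : IsStrictlyPositive a) (hb : IsStrictlyPositive b)
    (hm : 0 < m) (hh : 1 < h)
    (hs : ∀ x ∈ spectrum ℝ b, m ≤ x ∧ x ≤ h * m) (ht0 : 0 ≤ t) (ht1 : t ≤ 1/2) (x : R)
    (hx : x = gm (a ^ (-1 : ℝ)) b (1/2)) :
    (Kan' h (2 * (1 - t)))⁻¹ * Kan' h (1 / (1 - t)) ^ (t - 1) * ‖x ^ t * a * x ^ t‖ ≤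
        ‖gm a b t‖ ∧ ‖gm a b t‖ ≤ ‖x ^ t * a * x ^ t‖ := by
  have hxs : IsStrictlyPositive x := hx ▸ gm_sp (sp_rpow ha _) hb _
  have hxab : x * a * x = b := hx ▸ riccati ha hb
  have hsp := sp_conj hxs ha t
  have hgm := gm_sp ha hb t
  rcases subsingleton_or_nontrivial R with hR | hR
  · simp [Subsingleton.elim (x ^ t * a * x ^ t) 0, Subsingleton.elim (gm a b t) 0]
  constructor
  · rcases ht0.eq_or_lt with rfl | ht0
    · simp [Kan', Real.zero_rpow, Real.rpow_neg_one]
    rcases ht1.eq_or_lt with rfl | ht1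
    · norm_num [Kan']
    have hs0 : 0 < 1 - t := by linarith
    have hp1 : 1 < 1 / (1 - t) := by rw [lt_div_iff₀ hs0]; linarith
    have hp2 : 1 < 2 * (1 - t) := by linarith
    have hK1 := kan_pos h _ hh hp1
    have hK2 := kan_pos h _ hh hp2
    have hl : 0 < ‖gm a b t‖ := norm_pos_iff.2 hgm.isUnit.ne_zero
    have hys := sp_rpow hxs (-1)
    have hy : x ^ (-1 : ℝ) * b * x ^ (-1 : ℝ) = a := by
      rw [← hxab]
      nth_rw 2 3 [← CFC.rpow_one x hxs.nonneg]
      simp only [mul_assoc]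
      rw [rpow_merge hxs, rpow_merge' hxs]
      norm_num
      rw [CFC.rpow_zero _ hxs.nonneg, one_mul, mul_one]
    have hle : gm a b t ≤ ‖gm a b t‖ • (1 : R) := by
      rw [← Algebra.algebraMap_eq_smul_one]
      exact IsSelfAdjoint.le_algebraMap_norm_self hgm.isSelfAdjoint
    have key := lower_le ha hb hys hy m h t _ hm hh hl hs ht0 ht1 hle
    have e : (x ^ (-1 : ℝ)) ^ (1 - t) * b * (x ^ (-1 : ℝ)) ^ (1 - t) = x ^ t * a * x ^ t := by
      rw [rpow_rpow_sp hxs, ← hxab]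
      nth_rw 2 3 [← CFC.rpow_one x hxs.nonneg]
      simp only [mul_assoc]
      rw [rpow_merge hxs, rpow_merge' hxs]
      ring_nf
    rw [e, ← Algebra.algebraMap_eq_smul_one,
      ← CStarAlgebra.norm_le_iff_le_algebraMap _ (by positivity) hsp.nonneg] at key
    rw [show t - 1 = -(1 - t) by ring, Real.rpow_neg hK1.le, ← mul_inv,
      inv_mul_le_iff₀ (by positivity)]
    exact key
  · have hl : 0 < ‖x ^ t * a * x ^ t‖ := norm_pos_iff.2 hsp.isUnit.ne_zero
    rw [CStarAlgebra.norm_le_iff_le_algebraMap _ hl.le hgm.nonneg,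
      Algebra.algebraMap_eq_smul_one]
    refine upper_le ha hb hxs hxab t _ hl ⟨ht0, by linarith⟩ ?_
    rw [← Algebra.algebraMap_eq_smul_one]
    exact IsSelfAdjoint.le_algebraMap_norm_self hsp.isSelfAdjoint

end Abstract

lemma opPow_eq {A : H →L[ℂ] H} (hA : 0 ≤ A) (t : ℝ) : opPow A t = A ^ t :=
  (CFC.rpow_eq_cfc_real hA).symm

lemma geoMean_eq {A B : H →L[ℂ] H} (hA : IsStrictlyPositive A) (hB : IsStrictlyPositive B)
    (t : ℝ) : geoMean A B t = gm A B t := by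
  unfold geoMean gm
  rw [opPow_eq hA.nonneg, opPow_eq hA.nonneg, opPow_eq (sp_conj hA hB _).nonneg]

/-- Theorem 3.1 (iii): for `0 ≤ t ≤ 1/2` and `h = M/m`,
`K(h,2(1-t))⁻¹ K(h,1/(1-t))^(t-1) ‖A spₜ B‖ ≤ ‖A ♯ₜ B‖ ≤ ‖A spₜ B‖`. -/
theorem stmt_6 (A B : H →L[ℂ] H) (m M t : ℝ) (hm : 0 < m) (hmM : m < M)
    (hA₁ : (m : ℂ) • (1 : H →L[ℂ] H) ≤ A) (hA₂ : A ≤ (M : ℂ) • (1 : H →L[ℂ] H))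
    (hB₁ : (m : ℂ) • (1 : H →L[ℂ] H) ≤ B) (hB₂ : B ≤ (M : ℂ) • (1 : H →L[ℂ] H))
    (ht₁ : 0 ≤ t) (ht₂ : t ≤ 1/2) (h : ℝ) (hh : h = M / m) :
    (Kan' h (2 * (1 - t)))⁻¹ * Kan' h (1 / (1 - t)) ^ (t - 1) * ‖spMean A B t‖ ≤
        ‖geoMean A B t‖ ∧
      ‖geoMean A B t‖ ≤ ‖spMean A B t‖ := by
  have e : ∀ c : ℝ, (c : ℂ) • (1 : H →L[ℂ] H) = algebraMap ℝ (H →L[ℂ] H) c := fun c => by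
    rw [Algebra.algebraMap_eq_smul_one]; rfl
  rw [e] at hA₁ hA₂ hB₁ hB₂
  have hA : IsStrictlyPositive A := (isStrictlyPositive_algebraMap hm).of_le hA₁
  have hB : IsStrictlyPositive B := (isStrictlyPositive_algebraMap hm).of_le hB₁
  have hhm : h * m = M := by rw [hh]; field_simp
  have hX := gm_sp (sp_rpow hA (-1)) hB (1/2)
  unfold spMean
  rw [CFC.inverse_eq_rpow_neg_one hA, geoMean_eq (sp_rpow hA _) hB, geoMean_eq hA hB,
    opPow_eq hX.nonneg]
  refine norm_ineqs m h t hA hB hm (by rw [hh, lt_div_iff₀ hm]; linarith) ?_ ht₁ ht₂ _ rfl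
  intro x hx
  rw [hhm]
  exact ⟨(algebraMap_le_iff_le_spectrum hB.isSelfAdjoint).1 hB₁ x hx,
    (le_algebraMap_iff_spectrum_le hB.isSelfAdjoint).1 hB₂ x hx⟩
end
end

section
/- Let A and B be n×n positive definite complex matrices. Then A sp_{−1} B ≺_log A B^{−1} A. -/
noncomputable section

open Matrix
open scoped ComplexOrder

variable {n : ℕ}

/-- Real power of a matrix, via the (Hermitian) continuous functional calculus,
i.e. via diagonalization for Hermitian matrices. -/
def mPow (A : Matrix (Fin n) (Fin n) ℂ) (t : ℝ) : Matrix (Fin n) (Fin n) ℂ :=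
  cfc (fun x : ℝ => x ^ t) A

/-- The logarithm of a matrix, via diagonalization for Hermitian matrices. -/
def mLog (A : Matrix (Fin n) (Fin n) ℂ) : Matrix (Fin n) (Fin n) ℂ :=
  cfc Real.log A

/-- The weighted geometric mean `A ♯ₜ B = A^(1/2) (A^(-1/2) B A^(-1/2))^t A^(1/2)`. -/
def mGeo (A B : Matrix (Fin n) (Fin n) ℂ) (t : ℝ) : Matrix (Fin n) (Fin n) ℂ :=
  mPow A (1/2) * mPow (mPow A (-(1/2)) * B * mPow A (-(1/2))) t * mPow A (1/2)

/-- The weighted spectral geometric mean `A spₜ B = (A⁻¹ ♯ B)^t A (A⁻¹ ♯ B)^t`,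
where `A ♯ B` is the (unweighted, `t = 1/2`) geometric mean. -/
def mSp (A B : Matrix (Fin n) (Fin n) ℂ) (t : ℝ) : Matrix (Fin n) (Fin n) ℂ :=
  mPow (mGeo A⁻¹ B (1/2)) t * A * mPow (mGeo A⁻¹ B (1/2)) t

/-- The eigenvalues of a Hermitian matrix, listed in decreasing order
(junk value `0` for non-Hermitian matrices). -/
def eigsDec (A : Matrix (Fin n) (Fin n) ℂ) : Fin n → ℝ :=
  if hA : A.IsHermitian then
    fun j => (hA.eigenvalues ∘ Tuple.sort hA.eigenvalues) j.rev
  else 0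

/-- Log-majorization `X ≺_log Y`: the products of the `k` largest eigenvalues satisfy
`∏_{j=1}^k λ_j(X) ≤ ∏_{j=1}^k λ_j(Y)` for `k = 1, …, n-1`, and `det X = det Y`. -/
def LogMaj (X Y : Matrix (Fin n) (Fin n) ℂ) : Prop :=
  (∀ k : ℕ, k ≤ n - 1 →
      ∏ j ∈ Finset.univ.filter (fun j : Fin n => (j : ℕ) < k), eigsDec X j ≤
        ∏ j ∈ Finset.univ.filter (fun j : Fin n => (j : ℕ) < k), eigsDec Y j) ∧
    X.det = Y.det

lemma spec_eq {A : Matrix (Fin n) (Fin n) ℂ} (hA : A.IsHermitian) :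
    A = (hA.eigenvectorUnitary : Matrix (Fin n) (Fin n) ℂ) *
      diagonal (fun i => ((hA.eigenvalues i : ℝ) : ℂ)) *
      (hA.eigenvectorUnitary : Matrix (Fin n) (Fin n) ℂ)ᴴ := by
  conv_lhs => rw [hA.spectral_theorem, Unitary.conjStarAlgAut_apply]
  rfl

lemma uni_left {A : Matrix (Fin n) (Fin n) ℂ} (hA : A.IsHermitian) :
    (hA.eigenvectorUnitary : Matrix (Fin n) (Fin n) ℂ)ᴴ *
      (hA.eigenvectorUnitary : Matrix (Fin n) (Fin n) ℂ) = 1 :=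
  Unitary.coe_star_mul_self hA.eigenvectorUnitary

lemma uni_right {A : Matrix (Fin n) (Fin n) ℂ} (hA : A.IsHermitian) :
    (hA.eigenvectorUnitary : Matrix (Fin n) (Fin n) ℂ) *
      (hA.eigenvectorUnitary : Matrix (Fin n) (Fin n) ℂ)ᴴ = 1 :=
  Unitary.coe_mul_star_self hA.eigenvectorUnitary

lemma mPow_eq {A : Matrix (Fin n) (Fin n) ℂ} (hA : A.IsHermitian) (t : ℝ) :
    mPow A t = (hA.eigenvectorUnitary : Matrix (Fin n) (Fin n) ℂ) *
      diagonal (fun i => (((hA.eigenvalues i) ^ t : ℝ) : ℂ)) *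
      (hA.eigenvectorUnitary : Matrix (Fin n) (Fin n) ℂ)ᴴ := by
  rw [mPow, hA.cfc_eq, Matrix.IsHermitian.cfc, Unitary.conjStarAlgAut_apply]
  rfl

lemma mPow_one {A : Matrix (Fin n) (Fin n) ℂ} (hA : A.PosDef) : mPow A 1 = A := by
  rw [mPow_eq hA.1]
  simp only [Real.rpow_one]
  exact (spec_eq hA.1).symm

lemma mPow_zero {A : Matrix (Fin n) (Fin n) ℂ} (hA : A.PosDef) : mPow A 0 = 1 := by
  rw [mPow_eq hA.1]
  simp [uni_right]

lemma mPow_add {A : Matrix (Fin n) (Fin n) ℂ} (hA : A.PosDef) (s t : ℝ) :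
    mPow A s * mPow A t = mPow A (s + t) := by
  rw [mPow_eq hA.1, mPow_eq hA.1, mPow_eq hA.1]
  set U := (hA.1.eigenvectorUnitary : Matrix (Fin n) (Fin n) ℂ)
  have h1 : Uᴴ * U = 1 := uni_left hA.1
  have h2 (D E : Matrix (Fin n) (Fin n) ℂ) : U * D * Uᴴ * (U * E * Uᴴ) = U * (D * E) * Uᴴ := by
    calc _ = U * D * (Uᴴ * U) * E * Uᴴ := by simp only [Matrix.mul_assoc]
      _ = _ := by rw [h1]; simp only [Matrix.mul_assoc, Matrix.one_mul]
  rw [h2, diagonal_mul_diagonal]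
  congr 3
  ext i
  rw [Real.rpow_add (hA.eigenvalues_pos i)]
  push_cast
  rfl

lemma posDef_conj {m : ℕ} {D : Matrix (Fin n) (Fin n) ℂ} (hD : D.PosDef)
    (V : Matrix (Fin n) (Fin m) ℂ) (L : Matrix (Fin m) (Fin n) ℂ) (h : L * V = 1) :
    (Vᴴ * D * V).PosDef := by
  apply hD.conjTranspose_mul_mul_same
  intro x y hxy
  have := congrArg (fun z => L *ᵥ z) hxy
  simpa [Matrix.mulVec_mulVec, h] using this

lemma mPow_posDef {A : Matrix (Fin n) (Fin n) ℂ} (hA : A.PosDef) (t : ℝ) :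
    (mPow A t).PosDef := by
  rw [mPow_eq hA.1]
  have h := posDef_conj (D := diagonal (fun i => (((hA.1.eigenvalues i) ^ t : ℝ) : ℂ)))
    (PosDef.diagonal fun i => by
      have := Real.rpow_pos_of_pos (hA.eigenvalues_pos i) t
      exact_mod_cast this)
    (hA.1.eigenvectorUnitary : Matrix (Fin n) (Fin n) ℂ)ᴴ _ (uni_right hA.1)
  simpa using h

lemma mPow_mul_neg {A : Matrix (Fin n) (Fin n) ℂ} (hA : A.PosDef) (t : ℝ) :
    mPow A t * mPow A (-t) = 1 := by
  rw [mPow_add hA, add_neg_cancel, mPow_zero hA]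

lemma mPow_neg_mul {A : Matrix (Fin n) (Fin n) ℂ} (hA : A.PosDef) (t : ℝ) :
    mPow A (-t) * mPow A t = 1 := by
  rw [mPow_add hA, neg_add_cancel, mPow_zero hA]

lemma mPow_half {A : Matrix (Fin n) (Fin n) ℂ} (hA : A.PosDef) :
    mPow A (1/2) * mPow A (1/2) = A := by
  rw [mPow_add hA, add_halves, mPow_one hA]

lemma mPow_neg_one {A : Matrix (Fin n) (Fin n) ℂ} (hA : A.PosDef) : mPow A (-1) = A⁻¹ := by
  have := mPow_mul_neg hA 1
  rw [mPow_one hA] at this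
  exact (Matrix.inv_eq_right_inv this).symm

lemma geo_posDef {A B : Matrix (Fin n) (Fin n) ℂ} (hA : A.PosDef) (hB : B.PosDef) :
    (mPow A (-(1/2)) * B * mPow A (-(1/2))).PosDef ∧ (mGeo A B (1/2)).PosDef := by
  have h1 : (mPow A (-(1/2)) * B * mPow A (-(1/2))).PosDef := by
    have := posDef_conj hB (mPow A (-(1/2))) _ (mPow_mul_neg hA (1/2))
    rwa [(mPow_posDef hA (-(1/2))).1.eq] at this
  refine ⟨h1, ?_⟩
  have := posDef_conj (mPow_posDef h1 (1/2)) (mPow A (1/2)) _ (mPow_neg_mul hA (1/2))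
  rwa [(mPow_posDef hA (1/2)).1.eq] at this

/-- Riccati equation. -/
lemma geo_riccati {A B : Matrix (Fin n) (Fin n) ℂ} (hA : A.PosDef) (hB : B.PosDef) :
    mGeo A⁻¹ B (1/2) * A * mGeo A⁻¹ B (1/2) = B := by
  have hC := hA.inv
  obtain ⟨h1, h2⟩ := geo_posDef hC hB
  have e1 := mPow_half hC
  have e2 := mPow_mul_neg hC (1/2)
  have e3 := mPow_neg_mul hC (1/2)
  have e4 := mPow_half h1
  have hAC : A * A⁻¹ = 1 := Matrix.mul_nonsing_inv _ ((Matrix.isUnit_iff_isUnit_det _).1 hA.isUnit)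
  unfold mGeo
  set R := mPow A⁻¹ (1/2)
  set Q := mPow A⁻¹ (-(1/2))
  set M := mPow (Q * B * Q) (1/2)
  have e5 : R * A * R = 1 := by
    have : A * R * R = 1 := by rw [Matrix.mul_assoc, e1, hAC]
    have h : A * R = Q := by
      calc A * R = A * R * (R * Q) := by rw [e2, Matrix.mul_one]
        _ = A * R * R * Q := by simp only [Matrix.mul_assoc]
        _ = Q := by rw [this, Matrix.one_mul]
    rw [Matrix.mul_assoc, h, e2]
  calc R * M * R * A * (R * M * R) = R * M * (R * A * R) * M * R := by
        simp only [Matrix.mul_assoc]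
    _ = R * (M * M) * R := by rw [e5, Matrix.mul_one]; simp only [Matrix.mul_assoc]
    _ = (R * Q) * B * (Q * R) := by rw [e4]; simp only [Matrix.mul_assoc]
    _ = B := by rw [e2, e3]; simp

lemma det_one_add_ge {D : Matrix (Fin n) (Fin n) ℂ} (hD : D.PosSemidef) : 1 ≤ (1 + D).det := by
  have h : (1 + D) = (hD.1.eigenvectorUnitary : Matrix (Fin n) (Fin n) ℂ) *
      diagonal (fun i => ((1 + hD.1.eigenvalues i : ℝ) : ℂ)) *
      (hD.1.eigenvectorUnitary : Matrix (Fin n) (Fin n) ℂ)ᴴ := by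
    have : diagonal (fun i => ((1 + hD.1.eigenvalues i : ℝ) : ℂ)) = 1 +
        diagonal (fun i => ((hD.1.eigenvalues i : ℝ) : ℂ)) := by
      rw [← diagonal_one, diagonal_add]; simp
    rw [this, Matrix.mul_add, Matrix.add_mul, ← spec_eq, Matrix.mul_one, uni_right]
  rw [h, det_mul_right_comm, uni_right, Matrix.one_mul, det_diagonal]
  have : (1:ℝ) ≤ ∏ i, (1 + hD.1.eigenvalues i) := by
    have := Finset.prod_le_prod (s := Finset.univ) (f := fun _ : Fin n => (1:ℝ))
      (g := fun i => 1 + hD.1.eigenvalues i) (fun i _ => zero_le_one)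
      (fun i _ => by linarith [hD.eigenvalues_nonneg i])
    simpa using this
  exact_mod_cast this

lemma det_le_add {P D : Matrix (Fin n) (Fin n) ℂ} (hP : P.PosDef) (hD : D.PosSemidef) :
    P.det ≤ (P + D).det := by
  set S := mPow P (1/2)
  set Q := mPow P (-(1/2))
  have e1 : S * S = P := mPow_half hP
  have e2 : S * Q = 1 := mPow_mul_neg hP _
  have e3 : Q * S = 1 := mPow_neg_mul hP _
  have hQ : Qᴴ = Q := (mPow_posDef hP _).1.eq
  have h : P + D = S * (1 + Qᴴ * D * Q) * S := by
    rw [Matrix.mul_add, Matrix.add_mul, Matrix.mul_one, e1, hQ]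
    congr 1
    calc D = (S * Q) * D * (Q * S) := by rw [e2, e3]; simp
      _ = _ := by simp only [Matrix.mul_assoc]
  have h2 := det_one_add_ge (hD.conjTranspose_mul_mul_same Q)
  rw [h, det_mul_right_comm, det_mul, e1]
  exact le_mul_of_one_le_right hP.det_pos.le h2

lemma det_mono' {P D : Matrix (Fin n) (Fin n) ℂ} (hP : P.PosSemidef) (hD : (D - P).PosSemidef) :
    P.det ≤ D.det := by
  by_cases h : IsUnit P
  · have := det_le_add (hP.posDef_iff_isUnit.2 h) hD
    simpa using this
  · have h0 : P.det = 0 := by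
      rw [Matrix.isUnit_iff_isUnit_det, isUnit_iff_ne_zero, not_not] at h
      exact h
    have hDD : D.PosSemidef := by simpa using hP.add hD
    rw [h0]
    exact hDD.det_nonneg

/-- The projection onto the range of `W` is at most one. -/
lemma proj_le {m : ℕ} {W : Matrix (Fin n) (Fin m) ℂ} (hW : (Wᴴ * W).PosDef) :
    (1 - W * (Wᴴ * W)⁻¹ * Wᴴ).PosSemidef := by
  have hinv : (Wᴴ * W)⁻¹ * (Wᴴ * W) = 1 :=
    Matrix.nonsing_inv_mul _ ((Matrix.isUnit_iff_isUnit_det _).1 hW.isUnit)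
  set E := W * (Wᴴ * W)⁻¹ * Wᴴ with hE
  have hEh : Eᴴ = E := by
    rw [hE, conjTranspose_mul, conjTranspose_mul, conjTranspose_conjTranspose, hW.inv.1.eq,
      Matrix.mul_assoc]
  have hEE : E * E = E := by
    calc E * E = W * ((Wᴴ * W)⁻¹ * (Wᴴ * W)) * (Wᴴ * W)⁻¹ * Wᴴ := by
          rw [hE]; simp only [Matrix.mul_assoc]
      _ = E := by rw [hinv, Matrix.mul_one]
  have : (1 - E) = (1 - E)ᴴ * (1 - E) := by
    rw [conjTranspose_sub, hEh, conjTranspose_one]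
    simp [Matrix.sub_mul, Matrix.mul_sub, hEE]
  rw [this]
  exact posSemidef_conjTranspose_mul_self _

/-- Cauchy-Schwarz for determinants. -/
lemma det_cs {m : ℕ} {P Q : Matrix (Fin n) (Fin m) ℂ} (hP : (Pᴴ * P).PosDef) :
    (Pᴴ * Q).det * star (Pᴴ * Q).det ≤ (Pᴴ * P).det * (Qᴴ * Q).det := by
  have h1 := (proj_le hP).conjTranspose_mul_mul_same Q
  have h2 : ((Pᴴ * Q)ᴴ * (Pᴴ * P)⁻¹ * (Pᴴ * Q)).PosSemidef :=
    hP.inv.posSemidef.conjTranspose_mul_mul_same _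
  have h3 : ((Pᴴ * Q)ᴴ * (Pᴴ * P)⁻¹ * (Pᴴ * Q)).det ≤ (Qᴴ * Q).det := by
    apply det_mono' h2
    convert h1 using 1
    simp only [conjTranspose_mul, conjTranspose_conjTranspose, Matrix.mul_sub, Matrix.sub_mul,
      Matrix.mul_one, Matrix.mul_assoc]
  have h4 := mul_le_mul_of_nonneg_left h3 hP.det_pos.le
  refine le_trans (le_of_eq ?_) h4
  have h5 : (Pᴴ * P).det * ((Pᴴ * P)⁻¹).det = 1 := by
    rw [← det_mul, Matrix.mul_nonsing_inv _ ((Matrix.isUnit_iff_isUnit_det _).1 hP.isUnit), det_one]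
  rw [det_mul, det_mul (_)ᴴ, det_conjTranspose]
  linear_combination (-(Pᴴ * Q).det * star (Pᴴ * Q).det) * h5

lemma eigsDec_spec {X : Matrix (Fin n) (Fin n) ℂ} (hX : X.PosDef) :
    Antitone (eigsDec X) ∧ (∀ j, 0 < eigsDec X j) ∧ ∃ U : Matrix (Fin n) (Fin n) ℂ,
      Uᴴ * U = 1 ∧ U * Uᴴ = 1 ∧ X = U * diagonal (fun j => ((eigsDec X j : ℝ) : ℂ)) * Uᴴ := by
  have he : eigsDec X = fun j => hX.1.eigenvalues (Tuple.sort hX.1.eigenvalues j.rev) := by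
    unfold eigsDec
    rw [dif_pos hX.1]
    rfl
  refine ⟨?_, ?_, ?_⟩
  · rw [he]
    intro i j hij
    exact Tuple.monotone_sort hX.1.eigenvalues (Fin.rev_le_rev.2 hij)
  · rw [he]
    exact fun j => hX.eigenvalues_pos _
  · set σ : Equiv.Perm (Fin n) := Fin.revPerm.trans (Tuple.sort hX.1.eigenvalues)
    set U := (hX.1.eigenvectorUnitary : Matrix (Fin n) (Fin n) ℂ) with hU
    refine ⟨U.submatrix id σ, ?_, ?_, ?_⟩
    · have := Matrix.submatrix_mul_equiv Uᴴ U σ (Equiv.refl _) σ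
      rw [uni_left, Matrix.submatrix_one_equiv] at this
      rw [conjTranspose_submatrix]
      exact this
    · have := Matrix.submatrix_mul_equiv U Uᴴ id σ id
      rw [conjTranspose_submatrix, this, uni_right]; simp
    · have h1 : diagonal (fun j => ((eigsDec X j : ℝ) : ℂ)) =
        (diagonal (fun i => ((hX.1.eigenvalues i : ℝ) : ℂ))).submatrix σ σ := by
        rw [Matrix.submatrix_diagonal_equiv, he]
        rfl
      rw [h1, conjTranspose_submatrix, Matrix.submatrix_mul_equiv, Matrix.submatrix_mul_equiv,
        ← spec_eq]
      simp


lemma prod_filter_castLE {k : ℕ} (hk : k ≤ n) (f : Fin n → ℝ) :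
    ∏ j ∈ Finset.univ.filter (fun j : Fin n => (j : ℕ) < k), f j =
      ∏ i : Fin k, f (Fin.castLE hk i) := by
  symm
  refine Finset.prod_bij (fun i _ => Fin.castLE hk i) ?_ ?_ ?_ ?_
  · intro i _; simp
  · intro i _ j _ h; simpa using h
  · intro j hj
    exact ⟨⟨j, by simpa using hj⟩, Finset.mem_univ _, rfl⟩
  · intro i _; rfl

lemma det_compress {k : ℕ} (hk : k ≤ n) {Y : Matrix (Fin n) (Fin n) ℂ} (hY : Y.PosDef)
    {W : Matrix (Fin n) (Fin k) ℂ} (hW : (Wᴴ * W).PosDef) :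
    (Wᴴ * Y * W).det ≤ (Wᴴ * W).det *
      ((∏ j ∈ Finset.univ.filter (fun j : Fin n => (j : ℕ) < k), eigsDec Y j : ℝ) : ℂ) := by
  obtain ⟨hanti, hpos, U, hU1, hU2, hYU⟩ := eigsDec_spec hY
  rcases k with _ | m
  · simp
  set lam := eigsDec Y
  set c : ℝ := lam ⟨m, hk⟩ with hc
  have hc0 : 0 < c := hpos _
  set mu : Fin n → ℝ := fun j => max (lam j / c) 1 with hmu
  set r : Fin n → ℝ := fun j => Real.sqrt (mu j - 1) with hr
  have hrr : ∀ j, r j * r j = mu j - 1 := fun j =>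
    Real.mul_self_sqrt (by simp [hmu])
  set R : Matrix (Fin n) (Fin n) ℂ := diagonal (fun j => (r j : ℂ)) with hR
  have hRh : Rᴴ = R := by
    rw [hR, diagonal_conjTranspose]; congr 1; ext j; simp
  have hRR : 1 + R * R = diagonal (fun j => (mu j : ℂ)) := by
    rw [hR, diagonal_mul_diagonal, ← diagonal_one, diagonal_add]
    congr 1; ext j
    have := hrr j
    have h2 : (r j : ℂ) * (r j : ℂ) = ((mu j - 1 : ℝ) : ℂ) := by exact_mod_cast this
    rw [h2]; push_cast; ring
  set Z := Uᴴ * W with hZ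
  have hZZ : Zᴴ * Z = Wᴴ * W := by
    rw [hZ, conjTranspose_mul, conjTranspose_conjTranspose]
    calc Wᴴ * U * (Uᴴ * W) = Wᴴ * (U * Uᴴ) * W := by simp only [Matrix.mul_assoc]
      _ = _ := by rw [hU2, Matrix.mul_one]
  have hZP : (Zᴴ * Z).PosDef := by rw [hZZ]; exact hW
  have hZY : Wᴴ * Y * W = Zᴴ * diagonal (fun j => (lam j : ℂ)) * Z := by
    rw [hYU, hZ, conjTranspose_mul, conjTranspose_conjTranspose]
    simp only [Matrix.mul_assoc]
  have step1 : (Wᴴ * Y * W).det ≤ (Zᴴ * ((c : ℂ) • (1 + R * R)) * Z).det := by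
    apply det_mono' (hY.posSemidef.conjTranspose_mul_mul_same W)
    rw [hZY, ← Matrix.sub_mul, ← Matrix.mul_sub]
    apply PosSemidef.conjTranspose_mul_mul_same
    rw [hRR, ← diagonal_smul, diagonal_sub]
    apply PosSemidef.diagonal
    intro j
    have h : 0 ≤ c * mu j - lam j := by
      have h1 : lam j / c ≤ mu j := le_max_left _ _
      rw [div_le_iff₀ hc0] at h1
      linarith
    simp only [Pi.zero_apply, Pi.smul_apply, smul_eq_mul]
    exact_mod_cast h
  have step2 : (Zᴴ * ((c : ℂ) • (1 + R * R)) * Z).det =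
      (c : ℂ) ^ (m + 1) * ((Zᴴ * Z).det * (1 + R * (Z * (Zᴴ * Z)⁻¹ * Zᴴ) * R).det) := by
    rw [Matrix.mul_smul, Matrix.smul_mul, det_smul, Fintype.card_fin]
    congr 1
    have h1 : (1 + R * (Z * (Zᴴ * Z)⁻¹ * Zᴴ) * R).det =
        (1 + ((Zᴴ * Z)⁻¹ * Zᴴ * R) * (R * Z)).det := by
      rw [det_one_add_mul_comm ((Zᴴ * Z)⁻¹ * Zᴴ * R) (R * Z)]; simp only [Matrix.mul_assoc]
    rw [h1, ← det_mul]
    congr 1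
    have h2 : (Zᴴ * Z) * (Zᴴ * Z)⁻¹ = 1 :=
      Matrix.mul_nonsing_inv _ ((Matrix.isUnit_iff_isUnit_det _).1 hZP.isUnit)
    calc Zᴴ * (1 + R * R) * Z = Zᴴ * Z + Zᴴ * R * (R * Z) := by
          simp only [Matrix.mul_add, Matrix.add_mul, Matrix.mul_one, Matrix.mul_assoc]
      _ = Zᴴ * Z + ((Zᴴ * Z) * (Zᴴ * Z)⁻¹) * Zᴴ * R * (R * Z) := by
          rw [h2, Matrix.one_mul]
      _ = _ := by
          simp only [Matrix.mul_add, Matrix.mul_one, Matrix.mul_assoc]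
  have step3 : (1 + R * (Z * (Zᴴ * Z)⁻¹ * Zᴴ) * R).det ≤ (1 + R * R).det := by
    apply det_mono'
    · refine PosSemidef.one.add ?_
      have := (hZP.inv.posSemidef.mul_mul_conjTranspose_same Z).mul_mul_conjTranspose_same R
      rwa [hRh] at this
    · have := (proj_le hZP).mul_mul_conjTranspose_same R
      rw [hRh] at this
      convert this using 1
      simp only [Matrix.mul_sub, Matrix.sub_mul, Matrix.mul_one]
      abel
  have step4 : (c : ℂ) ^ (m + 1) * (1 + R * R).det =
      ((∏ j ∈ Finset.univ.filter (fun j : Fin n => (j : ℕ) < m + 1), lam j : ℝ) : ℂ) := by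
    rw [hRR, det_diagonal]
    have h1 : ∏ j, mu j = ∏ j ∈ Finset.univ.filter (fun j : Fin n => (j : ℕ) < m + 1),
        lam j / c := by
      rw [Finset.prod_filter]
      refine Finset.prod_congr rfl fun j _ => ?_
      split_ifs with h
      · apply max_eq_left
        rw [le_div_iff₀ hc0, one_mul]
        exact hanti (by rw [Fin.le_def]; simp; omega)
      · apply max_eq_right
        rw [div_le_iff₀ hc0, one_mul]
        exact hanti (by rw [Fin.le_def]; simp; omega)
    have h2 : c ^ (m + 1) * ∏ j, mu j =
        ∏ j ∈ Finset.univ.filter (fun j : Fin n => (j : ℕ) < m + 1), lam j := by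
      rw [h1, prod_filter_castLE hk, prod_filter_castLE hk, Finset.prod_div_distrib]
      simp only [Finset.prod_const, Finset.card_univ, Fintype.card_fin]
      field_simp
    rw [← h2]; push_cast; rfl
  rw [← step4, ← hZZ]
  refine step1.trans (step2.le.trans ?_)
  have h5 : (0 : ℂ) ≤ (c : ℂ) ^ (m + 1) := by
    have : (0:ℝ) ≤ c ^ (m+1) := by positivity
    exact_mod_cast this
  have := mul_le_mul_of_nonneg_left (mul_le_mul_of_nonneg_left step3 hZP.det_pos.le) h5
  refine this.trans (le_of_eq ?_)
  ring

lemma main_ineq {A H S Q : Matrix (Fin n) (Fin n) ℂ} (hA : A.PosDef) (hH : H.PosDef)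
    (hS : Sᴴ = S) (hQ : Qᴴ = Q) (hSS : S * S = A) (hQS : Q * S = 1)
    (hX : (H * A * H).PosDef) (hY : (A * (H * (Q * Q) * H) * A).PosDef)
    {k : ℕ} (hk : k ≤ n) :
    ∏ j ∈ Finset.univ.filter (fun j : Fin n => (j : ℕ) < k), eigsDec (H * A * H) j ≤
      ∏ j ∈ Finset.univ.filter (fun j : Fin n => (j : ℕ) < k),
        eigsDec (A * (H * (Q * Q) * H) * A) j := by
  obtain ⟨-, hpos, U, hU1, hU2, hXU⟩ := eigsDec_spec hX
  set X := H * A * H with hXdef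
  set Y := A * (H * (Q * Q) * H) * A with hYdef
  have hAh := hA.1.eq
  have hHh := hH.1.eq
  set ι : Fin k → Fin n := Fin.castLE hk
  have hι : Function.Injective ι := Fin.castLE_injective hk
  set V : Matrix (Fin n) (Fin k) ℂ := U.submatrix id ι with hV
  set D : Matrix (Fin k) (Fin k) ℂ := diagonal (fun i => ((eigsDec X (ι i) : ℝ) : ℂ)) with hD
  have hVV : Vᴴ * V = 1 := by
    have := congrArg (fun M => M.submatrix ι ι) hU1
    simp only [Matrix.submatrix_one ι hι] at this
    rw [← this, Matrix.submatrix_mul _ _ ι id ι Function.bijective_id]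
    rfl
  have hXV : X * V = V * D := by
    have h1 : X * U = U * diagonal (fun j => ((eigsDec X j : ℝ) : ℂ)) := by
      conv_lhs => rw [hXU]
      rw [Matrix.mul_assoc, hU1, Matrix.mul_one]
    ext i j
    have := congrFun (congrFun h1 i) (ι j)
    rw [Matrix.mul_diagonal] at this
    rw [hD, Matrix.mul_diagonal]
    exact this
  set W := A * H * V with hWdef
  have hWinv : (Vᴴ * H⁻¹ * A⁻¹) * W = 1 := by
    have a1 : A⁻¹ * A = 1 := Matrix.nonsing_inv_mul _ ((Matrix.isUnit_iff_isUnit_det _).1 hA.isUnit)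
    have a2 : H⁻¹ * H = 1 := Matrix.nonsing_inv_mul _ ((Matrix.isUnit_iff_isUnit_det _).1 hH.isUnit)
    calc (Vᴴ * H⁻¹ * A⁻¹) * W = Vᴴ * (H⁻¹ * ((A⁻¹ * A) * H)) * V := by
          rw [hWdef]; simp only [Matrix.mul_assoc]
      _ = 1 := by rw [a1, Matrix.one_mul, a2, Matrix.mul_one, hVV]
  have hWP : (Wᴴ * W).PosDef := by
    have := posDef_conj PosDef.one W _ hWinv
    rwa [Matrix.mul_one] at this
  have hPP : (Q * H * A * W)ᴴ * (Q * H * A * W) = Wᴴ * Y * W := by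
    simp only [conjTranspose_mul, hAh, hHh, hQ, hYdef, Matrix.mul_assoc]
  have hQQ : (S * H * W)ᴴ * (S * H * W) = Wᴴ * X * W := by
    rw [hXdef, ← hSS]
    simp only [conjTranspose_mul, hHh, hS, Matrix.mul_assoc]
  have hPQ : (Q * H * A * W)ᴴ * (S * H * W) = Wᴴ * W * D := by
    calc _ = Wᴴ * (A * H * ((Q * S) * (H * W))) := by
          simp only [conjTranspose_mul, hAh, hHh, hQ, Matrix.mul_assoc]
      _ = Wᴴ * (A * H * (X * V)) := by
          rw [hQS, Matrix.one_mul, hXdef, hWdef]; simp only [Matrix.mul_assoc]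
      _ = _ := by rw [hXV, hWdef]; simp only [Matrix.mul_assoc]
  have hPD : ((Q * H * A * W)ᴴ * (Q * H * A * W)).PosDef := by
    rw [hPP]; exact posDef_conj hY W _ hWinv
  have cs := det_cs (Q := S * H * W) hPD
  rw [hPP, hQQ, hPQ] at cs
  have cY := det_compress hk hY hWP
  have cX := det_compress hk hX hWP
  have hdetD : D.det = ((∏ j ∈ Finset.univ.filter (fun j : Fin n => (j : ℕ) < k),
      eigsDec X j : ℝ) : ℂ) := by
    rw [prod_filter_castLE hk, hD, det_diagonal]; push_cast; rfl
  set pX : ℝ := ∏ j ∈ Finset.univ.filter (fun j : Fin n => (j : ℕ) < k), eigsDec X j with hpX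
  set pY : ℝ := ∏ j ∈ Finset.univ.filter (fun j : Fin n => (j : ℕ) < k), eigsDec Y j
  have hpX0 : 0 < pX := Finset.prod_pos fun j _ => hpos j
  have hg := hWP.det_pos
  obtain ⟨g, hg0, hge⟩ : ∃ g : ℝ, 0 < g ∧ (Wᴴ * W).det = (g : ℂ) := by
    rw [Complex.lt_def] at hg
    exact ⟨(Wᴴ * W).det.re, hg.1, Complex.ext rfl (by simpa using hg.2.symm)⟩
  rw [hge] at cX cY
  rw [det_mul, hdetD, hge] at cs
  have hb : (0 : ℂ) ≤ (g : ℂ) * (pY : ℂ) :=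
    ((hY.posSemidef.conjTranspose_mul_mul_same W).det_nonneg).trans cY
  have fin := cs.trans (mul_le_mul cY cX
    ((hX.posSemidef.conjTranspose_mul_mul_same W).det_nonneg) hb)
  have fin' : (g * pX) * (g * pX) ≤ (g * pY) * (g * pX) := by
    have : ((g * pX * (g * pX) : ℝ) : ℂ) ≤ ((g * pY * (g * pX) : ℝ) : ℂ) := by
      push_cast
      simpa using fin
    exact_mod_cast this
  have h1 := le_of_mul_le_mul_right fin' (mul_pos hg0 hpX0)
  exact le_of_mul_le_mul_left h1 hg0

/-- Theorem 4.6: for positive definite matrices `A, B`,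
`A sp₋₁ B ≺_log A B⁻¹ A`. -/
theorem stmt_13 (A B : Matrix (Fin n) (Fin n) ℂ) (hA : A.PosDef) (hB : B.PosDef) :
    LogMaj (mSp A B (-1)) (A * B⁻¹ * A) := by
  have hG := (geo_posDef hA.inv hB).2
  have hR := geo_riccati hA hB
  unfold mSp
  rw [mPow_neg_one hG]
  set G := mGeo A⁻¹ B (1/2)
  have hH := hG.inv
  set H := G⁻¹ with hHdef
  have hS := (mPow_posDef hA (1/2)).1.eq
  have hQ := (mPow_posDef hA (-(1/2))).1.eq
  have hSS := mPow_half hA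
  have hQS := mPow_neg_mul hA (1/2)
  have hSQ := mPow_mul_neg hA (1/2)
  set S := mPow A (1/2)
  set Q := mPow A (-(1/2))
  have hGH : G * H = 1 := Matrix.mul_nonsing_inv _ ((Matrix.isUnit_iff_isUnit_det _).1 hG.isUnit)
  have hHG : H * G = 1 := Matrix.nonsing_inv_mul _ ((Matrix.isUnit_iff_isUnit_det _).1 hG.isUnit)
  have hBinv : B⁻¹ = H * (Q * Q) * H := by
    apply Matrix.inv_eq_right_inv
    rw [← hR, ← hSS]
    calc G * (S * S) * G * (H * (Q * Q) * H) = G * (S * (S * ((G * H) * Q) * Q)) * H := by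
          simp only [Matrix.mul_assoc]
      _ = 1 := by
          rw [hGH, Matrix.one_mul, hSQ, Matrix.one_mul, hSQ, Matrix.mul_one, hGH]
  have hX : (H * A * H).PosDef := by
    have := posDef_conj hA H _ hGH
    rwa [hH.1.eq] at this
  have hY : (A * B⁻¹ * A).PosDef := by
    have := posDef_conj hB.inv A A⁻¹
      (Matrix.nonsing_inv_mul _ ((Matrix.isUnit_iff_isUnit_det _).1 hA.isUnit))
    rwa [hA.1.eq] at this
  rw [hBinv] at hY ⊢
  refine ⟨fun k hk => main_ineq hA hH hS hQ hSS hQS hX hY (by omega), ?_⟩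
  have h1 : S.det * Q.det = 1 := by rw [← det_mul, hSQ, det_one]
  have h2 : A.det = S.det * S.det := by rw [← hSS, det_mul]
  simp only [det_mul, h2]
  linear_combination (-(S.det ^ 2 * H.det ^ 2) * (S.det * Q.det + 1)) * h1
end
end

section
/- Let A and B be n×n positive definite complex matrices, let a ∈ ℝ, and let z satisfy −1 ≤ z ≤ 1/2 with z ≠ 0. Then A^{(1−a)/2} B^{a} A^{(1−a)/2} ≺_log (A^{(1−a)/(2z)} B^{a/z} A^{(1−a)/(2z)})^{z}. -/
noncomputable section

open Matrix
open scoped ComplexOrder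

variable {n : ℕ}

namespace LM
variable {m : Type*} [Fintype m] [DecidableEq m]

def IsD (V : Matrix m m ℂ) (d : m → ℝ) (H : Matrix m m ℂ) : Prop :=
  Vᴴ * V = 1 ∧ H = V * diagonal (fun i => (d i : ℂ)) * Vᴴ

def gpow (H : Matrix m m ℂ) (t : ℝ) : Matrix m m ℂ := cfc (fun x : ℝ => x ^ t) H

lemma IsD.right {V : Matrix m m ℂ} {d : m → ℝ} {H : Matrix m m ℂ} (h : IsD V d H) :
    V * Vᴴ = 1 := mul_eq_one_comm.mp h.1

lemma isD_of_herm {H : Matrix m m ℂ} (hH : H.IsHermitian) :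
    IsD (hH.eigenvectorUnitary : Matrix m m ℂ) hH.eigenvalues H := by
  refine ⟨?_, ?_⟩
  · exact Unitary.coe_star_mul_self hH.eigenvectorUnitary
  · conv_lhs => rw [hH.spectral_theorem]
    rfl

lemma IsD.herm {V : Matrix m m ℂ} {d : m → ℝ} {H : Matrix m m ℂ} (h : IsD V d H) :
    H.IsHermitian := by
  rw [h.2]
  apply Matrix.isHermitian_mul_mul_conjTranspose
  rw [Matrix.IsHermitian, diagonal_conjTranspose]
  congr 1
  ext i
  simp

lemma IsD.aeval {V : Matrix m m ℂ} {d : m → ℝ} {H : Matrix m m ℂ} (h : IsD V d H)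
    (p : Polynomial ℝ) :
    IsD V (fun i => p.eval (d i)) (Polynomial.aeval H p) := by
  refine ⟨h.1, ?_⟩
  induction p using Polynomial.induction_on' with
  | add p q hp hq =>
    simp only [map_add, hp, hq, Polynomial.eval_add, Complex.ofReal_add]
    rw [← diagonal_add, mul_add, add_mul]
  | monomial k r =>
    have hk : H ^ k = V * diagonal (fun i => ((d i : ℂ)) ^ k) * Vᴴ := by
      induction k with
      | zero => simp [h.right]
      | succ k ih =>
        rw [pow_succ, ih]
        nth_rewrite 1 [h.2]
        calc _ = V * diagonal (fun i => ((d i : ℂ)) ^ k) * (Vᴴ * V) *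
                diagonal (fun i => (d i : ℂ)) * Vᴴ := by simp only [mul_assoc]
          _ = _ := by
            rw [h.1, mul_one, mul_assoc V, diagonal_mul_diagonal]
            simp only [pow_succ]
    rw [Polynomial.aeval_monomial, hk, ← Algebra.smul_def]
    have : diagonal (fun i => ((Polynomial.eval (d i) ((Polynomial.monomial k) r) : ℝ) : ℂ))
        = r • diagonal (fun i => ((d i : ℂ)) ^ k) := by
      rw [← diagonal_smul]; congr 1; ext i; simp
    rw [this, mul_smul_comm, smul_mul_assoc]

lemma IsD.cfc {V : Matrix m m ℂ} {d : m → ℝ} {H : Matrix m m ℂ} (h : IsD V d H)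
    (f : ℝ → ℝ) : IsD V (fun i => f (d i)) (cfc f H) := by
  have hs : IsSelfAdjoint H := h.herm
  let s : Finset ℝ := (Finset.univ.image d) ∪ (Matrix.finite_real_spectrum (A := H)).toFinset
  let p := Lagrange.interpolate s id f
  have hp : ∀ x ∈ s, p.eval x = f x := fun x hx =>
    Lagrange.eval_interpolate_at_node (s := s) (v := id) f (Set.injOn_id _) hx
  have h1 : _root_.cfc f H = _root_.cfc p.eval H := by
    apply cfc_congr
    intro x hx
    exact (hp x (by simp [s, hx])).symm
  rw [h1, cfc_polynomial p H hs]
  have := h.aeval p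
  have h2 : (fun i => p.eval (d i)) = fun i => f (d i) := by
    ext i; exact hp _ (by simp [s])
  rwa [h2] at this

lemma IsD.gpow {V : Matrix m m ℂ} {d : m → ℝ} {H : Matrix m m ℂ} (h : IsD V d H)
    (t : ℝ) : IsD V (fun i => d i ^ t) (gpow H t) := h.cfc _

lemma IsD.ext {V : Matrix m m ℂ} {d e : m → ℝ} {H K : Matrix m m ℂ} (h : IsD V d H)
    (h' : IsD V e K) (hde : ∀ i, d i = e i) : H = K := by
  rw [h.2, h'.2]; simp [hde]

lemma IsD.mul {V : Matrix m m ℂ} {d e : m → ℝ} {H K : Matrix m m ℂ} (h : IsD V d H)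
    (h' : IsD V e K) : IsD V (fun i => d i * e i) (H * K) := by
  refine ⟨h.1, ?_⟩
  rw [h.2, h'.2]
  calc _ = V * diagonal (fun i => ((d i : ℂ))) * (Vᴴ * V) *
                diagonal (fun i => (e i : ℂ)) * Vᴴ := by simp only [mul_assoc]
          _ = _ := by
            rw [h.1, mul_one, mul_assoc V, diagonal_mul_diagonal]
            simp

lemma IsD.smul {V : Matrix m m ℂ} {d : m → ℝ} {H : Matrix m m ℂ} (h : IsD V d H)
    (c : ℝ) : IsD V (fun i => c * d i) (c • H) := by
  refine ⟨h.1, ?_⟩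
  rw [h.2, ← smul_mul_assoc, ← mul_smul_comm, ← diagonal_smul]
  congr 3
  ext i
  simp

lemma IsD.one {V : Matrix m m ℂ} {d : m → ℝ} {H : Matrix m m ℂ} (h : IsD V d H) :
    IsD V (fun _ => 1) 1 := by
  refine ⟨h.1, ?_⟩
  simp [h.right]

lemma IsD.posSemidef_iff {V : Matrix m m ℂ} {d : m → ℝ} {H : Matrix m m ℂ} (h : IsD V d H) :
    H.PosSemidef ↔ ∀ i, 0 ≤ d i := by
  constructor
  · intro hH i
    have := hH.conjTranspose_mul_mul_same V
    have h2 : Vᴴ * H * V = diagonal (fun i => (d i : ℂ)) := by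
      rw [h.2]
      calc _ = (Vᴴ * V) * diagonal (fun i => ((d i : ℂ))) * (Vᴴ * V) := by simp only [mul_assoc]
        _ = _ := by simp [h.1]
    rw [h2, posSemidef_diagonal_iff] at this
    exact_mod_cast this i
  · intro hd
    rw [h.2]
    refine Matrix.PosSemidef.mul_mul_conjTranspose_same ?_ V
    rw [posSemidef_diagonal_iff]
    intro i
    exact_mod_cast hd i

lemma IsD.posDef_iff {V : Matrix m m ℂ} {d : m → ℝ} {H : Matrix m m ℂ} (h : IsD V d H) :
    H.PosDef ↔ ∀ i, 0 < d i := by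
  have hu : IsUnit V := IsUnit.of_mul_eq_one _ h.right
  have := Matrix.IsUnit.posDef_star_right_conjugate_iff (x := diagonal (fun i => (d i : ℂ))) hu
  rw [h.2]
  rw [Matrix.star_eq_conjTranspose] at this
  rw [this, posDef_diagonal_iff]
  simp

lemma IsD.sub_posSemidef {V : Matrix m m ℂ} {d : m → ℝ} {H : Matrix m m ℂ} (h : IsD V d H)
    (c : ℝ) : (c • (1 : Matrix m m ℂ) - H).PosSemidef ↔ ∀ i, d i ≤ c := by
  have h1 : IsD V (fun i => c - d i) (c • (1 : Matrix m m ℂ) - H) := by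
    refine ⟨h.1, ?_⟩
    rw [(h.one.smul c).2]
    conv_lhs => rw [h.2]
    rw [← sub_mul, ← mul_sub, diagonal_sub]
    simp
  rw [h1.posSemidef_iff]
  simp

lemma exD {H : Matrix m m ℂ} (hH : H.PosDef) : ∃ V d, IsD V d H ∧ ∀ i, 0 < d i :=
  ⟨_, _, isD_of_herm hH.1, hH.eigenvalues_pos⟩

lemma gpow_posDef {H : Matrix m m ℂ} (hH : H.PosDef) (t : ℝ) : (gpow H t).PosDef := by
  obtain ⟨V, d, h, hd⟩ := exD hH
  exact (h.gpow t).posDef_iff.2 fun i => Real.rpow_pos_of_pos (hd i) t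

lemma gpow_mul {H : Matrix m m ℂ} (hH : H.PosDef) (s t : ℝ) :
    gpow H s * gpow H t = gpow H (s + t) := by
  obtain ⟨V, d, h, hd⟩ := exD hH
  exact ((h.gpow s).mul (h.gpow t)).ext (h.gpow _) fun i => (Real.rpow_add (hd i) s t).symm

lemma gpow_gpow {H : Matrix m m ℂ} (hH : H.PosDef) (s t : ℝ) :
    gpow (gpow H s) t = gpow H (s * t) := by
  obtain ⟨V, d, h, hd⟩ := exD hH
  exact ((h.gpow s).gpow t).ext (h.gpow _) fun i => (Real.rpow_mul (hd i).le s t).symm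

lemma gpow_zero {H : Matrix m m ℂ} (hH : H.PosDef) : gpow H 0 = 1 := by
  obtain ⟨V, d, h, hd⟩ := exD hH
  exact (h.gpow 0).ext h.one fun i => Real.rpow_zero _

lemma gpow_one {H : Matrix m m ℂ} (hH : H.PosDef) : gpow H 1 = H := by
  obtain ⟨V, d, h, hd⟩ := exD hH
  exact (h.gpow 1).ext h fun i => Real.rpow_one _

lemma gpow_smul {H : Matrix m m ℂ} (hH : H.PosDef) (c t : ℝ) (hc : 0 < c) :
    gpow (c • H) t = c ^ t • gpow H t := by
  obtain ⟨V, d, h, hd⟩ := exD hH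
  exact ((h.smul c).gpow t).ext ((h.gpow t).smul _) fun i => Real.mul_rpow hc.le (hd i).le

lemma gpow_neg_one {H : Matrix m m ℂ} (hH : H.PosDef) : gpow H (-1) = H⁻¹ := by
  symm
  apply Matrix.inv_eq_left_inv
  conv_lhs => rw [← gpow_one hH, gpow_gpow hH, gpow_mul hH]
  norm_num
  exact gpow_zero hH

open scoped MatrixOrder Matrix.Norms.L2Operator in
lemma gpow_mono {P Q : Matrix m m ℂ} (hP : P.PosSemidef) (hPQ : (Q - P).PosSemidef) {w : ℝ}
    (h0 : 0 ≤ w) (h1 : w ≤ 1) : (gpow Q w - gpow P w).PosSemidef := by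
  have hle : P ≤ Q := hPQ
  have hP0 : 0 ≤ P := hP.nonneg
  have hQ0 : 0 ≤ Q := hP0.trans hle
  have := CFC.rpow_le_rpow (p := w) ⟨h0, h1⟩ hle
  rw [CFC.rpow_eq_cfc_real hP0, CFC.rpow_eq_cfc_real hQ0] at this
  exact this

lemma core {P Q : Matrix m m ℂ} (hP : P.PosDef) (hQ : Q.PosDef) {w c : ℝ}
    (h0 : 0 ≤ w) (h1 : w ≤ 1) (hc : 0 < c)
    (h : (c • (1 : Matrix m m ℂ) - gpow P (1/2) * Q * gpow P (1/2)).PosSemidef) :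
    (c ^ w • (1 : Matrix m m ℂ) - gpow P (w/2) * gpow Q w * gpow P (w/2)).PosSemidef := by
  have e1 := h.mul_mul_conjTranspose_same (gpow P (-(1/2)))
  rw [(gpow_posDef hP _).1.eq] at e1
  have e2 : gpow P (-(1/2)) * (c • (1 : Matrix m m ℂ) - gpow P (1/2) * Q * gpow P (1/2)) *
      gpow P (-(1/2)) = c • gpow P (-1) - Q := by
    calc _ = c • (gpow P (-(1/2)) * gpow P (-(1/2))) -
        (gpow P (-(1/2)) * gpow P (1/2)) * Q * (gpow P (1/2) * gpow P (-(1/2))) := by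
          rw [mul_sub, sub_mul, mul_smul_comm, smul_mul_assoc, mul_one]
          simp only [mul_assoc]
      _ = _ := by
          simp only [gpow_mul hP]
          norm_num [gpow_zero hP]
  rw [e2] at e1
  have e3 := gpow_mono hQ.posSemidef e1 h0 h1
  rw [gpow_smul (gpow_posDef hP _) _ _ hc, gpow_gpow hP] at e3
  have e4 := e3.mul_mul_conjTranspose_same (gpow P (w/2))
  rw [(gpow_posDef hP _).1.eq, mul_sub, sub_mul, mul_smul_comm, smul_mul_assoc] at e4
  simp only [gpow_mul hP] at e4
  have e5 : w / 2 + -1 * w + w / 2 = 0 := by ring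
  rwa [e5, gpow_zero hP] at e4

lemma det_gpow {H : Matrix m m ℂ} (hH : H.PosDef) (t : ℝ) :
    (gpow H t).det = (((H.det).re ^ t : ℝ) : ℂ) := by
  obtain ⟨V, d, h, hd⟩ := exD hH
  have key : ∀ (e : m → ℝ) (K : Matrix m m ℂ), IsD V e K → K.det = ((∏ i, e i : ℝ) : ℂ) := by
    intro e K hK
    rw [hK.2, det_mul_right_comm, h.right, one_mul, det_diagonal]
    push_cast; rfl
  rw [key _ _ h, key _ _ (h.gpow t), Complex.ofReal_re, Real.finsetProd_rpow _ _ (fun i _ => (hd i).le)]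


def comp (k : ℕ) (A : Matrix (Fin n) (Fin n) ℂ) :
    Matrix (Set.powersetCard (Fin n) k) (Set.powersetCard (Fin n) k) ℂ :=
  LinearMap.toMatrix ((Pi.basisFun ℂ (Fin n)).exteriorPower k)
    ((Pi.basisFun ℂ (Fin n)).exteriorPower k) (exteriorPower.map k (Matrix.toLin' A))

def emb {k : ℕ} (S : Set.powersetCard (Fin n) k) : Fin k ↪o Fin n :=
  Set.powersetCard.ofFinEmbEquiv.symm S

lemma comp_apply (k : ℕ) (A : Matrix (Fin n) (Fin n) ℂ) (S T) :
    comp k A S T = (A.submatrix (emb S) (emb T)).det := by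
  rw [comp, LinearMap.toMatrix_apply, exteriorPower.basis_apply, exteriorPower.basis_repr_apply,
    exteriorPower.map_apply_ιMulti_family, exteriorPower.ιMulti_family,
    exteriorPower.ιMultiDual_apply_ιMulti, ← det_transpose]
  congr 1
  ext i j
  simp [emb]

lemma comp_mul (k : ℕ) (A B : Matrix (Fin n) (Fin n) ℂ) :
    comp k (A * B) = comp k A * comp k B := by
  rw [comp, Matrix.toLin'_mul, exteriorPower.map_comp,
    LinearMap.toMatrix_comp _ ((Pi.basisFun ℂ (Fin n)).exteriorPower k)]
  rfl

lemma comp_one (k : ℕ) : comp k (1 : Matrix (Fin n) (Fin n) ℂ) = 1 := by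
  rw [comp, Matrix.toLin'_one, exteriorPower.map_id, LinearMap.toMatrix_id]

lemma comp_conjTranspose (k : ℕ) (A : Matrix (Fin n) (Fin n) ℂ) :
    comp k Aᴴ = (comp k A)ᴴ := by
  ext S T
  rw [conjTranspose_apply, comp_apply, comp_apply, ← det_conjTranspose, conjTranspose_submatrix]

lemma comp_diagonal (k : ℕ) (d : Fin n → ℂ) :
    comp k (diagonal d) = diagonal fun S => ∏ i : Fin k, d (emb S i) := by
  rw [comp, ← LinearMap.toMatrix_toLin ((Pi.basisFun ℂ (Fin n)).exteriorPower k)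
    ((Pi.basisFun ℂ (Fin n)).exteriorPower k) (diagonal fun S => ∏ i : Fin k, d (emb S i))]
  congr 1
  apply ((Pi.basisFun ℂ (Fin n)).exteriorPower k).ext
  intro S
  rw [Matrix.toLin_self]
  rw [Finset.sum_eq_single S]
  · rw [exteriorPower.basis_apply, exteriorPower.map_apply_ιMulti_family,
      exteriorPower.ιMulti_family, exteriorPower.ιMulti_family]
    rw [diagonal_apply_eq]
    have h1 := (exteriorPower.ιMulti ℂ k (M := Fin n → ℂ)).toMultilinearMap.map_smul_univ
      (fun i => d (emb S i)) (fun i => Pi.basisFun ℂ (Fin n) (emb S i))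
    refine Eq.trans ?_ h1
    change exteriorPower.ιMulti ℂ k _ = exteriorPower.ιMulti ℂ k _
    congr 1
    ext i j
    by_cases hj : j = emb S i
    · subst hj; simp [emb, diagonal_apply]
    · have hj' : ¬ j = Set.powersetCard.ofFinEmbEquiv.symm S i := hj
      simp [emb, diagonal_apply, Pi.single_apply, hj']
  · intro T _ hT
    rw [diagonal_apply_ne _ hT, zero_smul]
  · simp

/-- sorting -/
lemma prod_emb {k : ℕ} (S : Set.powersetCard (Fin n) k) (f : Fin n → ℝ) :
    ∏ i : Fin k, f (emb S i) = ∏ i ∈ S.1, f i := by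
  have : S.1 = Finset.univ.map (emb S).toEmbedding := by
    ext j
    have h := Set.powersetCard.mem_range_ofFinEmbEquiv_symm_iff_mem S j
    simp only [Finset.mem_map, Finset.mem_univ, true_and]
    exact h.symm
  rw [this, Finset.prod_map]
  rfl

lemma fin_le_emb {k : ℕ} (e : Fin k ↪o Fin n) (i : Fin k) : (i : ℕ) ≤ e i := by
  obtain ⟨i, hi⟩ := i
  induction i with
  | zero => simp
  | succ i ih =>
    have h1 := ih (by omega)
    have h2 : e ⟨i, by omega⟩ < e ⟨i+1, hi⟩ := e.strictMono (by simp)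
    have h3 : (e ⟨i, by omega⟩ : ℕ) < e ⟨i+1, hi⟩ := h2
    simp only at h1 ⊢
    omega

lemma prod_filter {k : ℕ} (hk : k ≤ n) (g : Fin n → ℝ) :
    ∏ j ∈ Finset.univ.filter (fun j : Fin n => (j : ℕ) < k), g j =
      ∏ i : Fin k, g (Fin.castLE hk i) := by
  have : Finset.univ.filter (fun j : Fin n => (j : ℕ) < k) =
      Finset.univ.map (Fin.castLEEmb hk) := by
    ext j
    simp only [Finset.mem_filter, Finset.mem_univ, true_and, Finset.mem_map]
    constructor
    · intro h; exact ⟨⟨j, h⟩, rfl⟩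
    · rintro ⟨i, rfl⟩; exact i.2
  rw [this, Finset.prod_map]
  rfl

lemma top_le {k : ℕ} (hk : k ≤ n) (f g : Fin n → ℝ) (σ : Equiv.Perm (Fin n))
    (hg : ∀ i, g i = f (σ i)) (hmono : Antitone g) (hpos : ∀ i, 0 < f i) (c : ℝ) :
    (∏ j ∈ Finset.univ.filter (fun j : Fin n => (j : ℕ) < k), g j ≤ c) ↔
      ∀ S : Set.powersetCard (Fin n) k, ∏ i : Fin k, f (emb S i) ≤ c := by
  constructor
  · intro h S
    refine le_trans ?_ h
    let T : Set.powersetCard (Fin n) k :=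
      ⟨S.1.map σ.symm.toEmbedding, by
        rw [Set.powersetCard.mem_iff, Finset.card_map]; exact S.2⟩
    have : ∏ i : Fin k, f (emb S i) = ∏ i : Fin k, g (emb T i) := by
      rw [prod_emb, prod_emb]
      simp [T, hg]
    rw [this, prod_filter hk]
    apply Finset.prod_le_prod
    · intro i _; rw [hg]; exact (hpos _).le
    · intro i _; apply hmono; exact fin_le_emb (emb T) i
  · intro h
    let T : Set.powersetCard (Fin n) k :=
      ⟨(Finset.univ.filter (fun j : Fin n => (j : ℕ) < k)).map σ.toEmbedding, by
        rw [Set.powersetCard.mem_iff, Finset.card_map]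
        have := Fin.card_filter_val_lt (n := n) (m := k)
        simp [this, hk]⟩
    have h2 := h T
    rw [prod_emb] at h2
    simpa [T, hg] using h2

end LM

namespace LM

lemma IsD.comp {V : Matrix (Fin n) (Fin n) ℂ} {d : Fin n → ℝ} {H : Matrix (Fin n) (Fin n) ℂ}
    (h : IsD V d H) (k : ℕ) :
    IsD (comp k V) (fun S => ∏ i : Fin k, d (emb S i)) (comp k H) := by
  refine ⟨?_, ?_⟩
  · rw [← comp_conjTranspose, ← comp_mul, h.1, comp_one]
  · conv_lhs => rw [h.2]
    rw [comp_mul, comp_mul, comp_diagonal, comp_conjTranspose]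
    simp

lemma comp_gpow {H : Matrix (Fin n) (Fin n) ℂ} (hH : H.PosDef) (k : ℕ) (t : ℝ) :
    LM.comp k (gpow H t) = gpow (LM.comp k H) t := by
  obtain ⟨V, d, h, hd⟩ := exD hH
  exact ((h.gpow t).comp k).ext ((h.comp k).gpow t) fun S =>
    Real.finsetProd_rpow _ _ (fun i _ => (hd _).le) t

lemma comp_posDef {H : Matrix (Fin n) (Fin n) ℂ} (hH : H.PosDef) (k : ℕ) :
    (LM.comp k H).PosDef := by
  obtain ⟨V, d, h, hd⟩ := exD hH
  exact (h.comp k).posDef_iff.2 fun S => Finset.prod_pos fun i _ => hd _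

def topk (k : ℕ) (H : Matrix (Fin n) (Fin n) ℂ) : ℝ :=
  ∏ j ∈ Finset.univ.filter (fun j : Fin n => (j : ℕ) < k), eigsDec H j

lemma topk_pos {H : Matrix (Fin n) (Fin n) ℂ} (hH : H.PosDef) (k : ℕ) : 0 < topk k H := by
  apply Finset.prod_pos
  intro i _
  rw [eigsDec, dif_pos hH.1]
  exact hH.eigenvalues_pos _

lemma topk_le_iff {H : Matrix (Fin n) (Fin n) ℂ} (hH : H.PosDef) {k : ℕ} (hk : k ≤ n) (c : ℝ) :
    topk k H ≤ c ↔ (c • 1 - LM.comp k H).PosSemidef := by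
  rw [((isD_of_herm hH.1).comp k).sub_posSemidef]
  apply top_le hk hH.1.eigenvalues (eigsDec H)
    (Fin.revPerm.trans (Tuple.sort hH.1.eigenvalues))
  · intro i
    rw [eigsDec, dif_pos hH.1]
    rfl
  · intro i j hij
    rw [eigsDec, dif_pos hH.1]
    exact Tuple.monotone_sort hH.1.eigenvalues (Fin.rev_le_rev.2 hij)
  · exact hH.eigenvalues_pos

lemma conj_posDef {P Q : Matrix (Fin n) (Fin n) ℂ} (hP : P.PosDef) (hQ : Q.PosDef) :
    (P * Q * P).PosDef := by
  have := (Matrix.IsUnit.posDef_star_right_conjugate_iff (x := Q) hP.isUnit).2 hQ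
  rwa [Matrix.star_eq_conjTranspose, hP.1.eq] at this

lemma araki {X Y : Matrix (Fin n) (Fin n) ℂ} (hX : X.PosDef) (hY : Y.PosDef) {w : ℝ}
    (h0 : 0 < w) (h1 : w ≤ 1) {k : ℕ} (hk : k ≤ n) :
    topk k (gpow X (w/2) * gpow Y w * gpow X (w/2)) ≤
      topk k (gpow (gpow X (1/2) * Y * gpow X (1/2)) w) := by
  set M := gpow X (1/2) * Y * gpow X (1/2) with hM
  have hMp : M.PosDef := conj_posDef (gpow_posDef hX _) hY
  set c := topk k (gpow M w) with hc
  have hcp : 0 < c := topk_pos (gpow_posDef hMp w) k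
  rw [topk_le_iff (conj_posDef (gpow_posDef hX _) (gpow_posDef hY _)) hk]
  have e1 := (topk_le_iff (gpow_posDef hMp w) hk c).1 le_rfl
  obtain ⟨V, d, h, hd⟩ := exD (comp_posDef hMp k)
  have e2 : ((c ^ (1 / w)) • 1 - LM.comp k M).PosSemidef := by
    rw [h.sub_posSemidef]
    rw [comp_gpow hMp, (h.gpow w).sub_posSemidef] at e1
    intro i
    have := Real.rpow_le_rpow (Real.rpow_nonneg (hd i).le w) (e1 i) (by positivity : 0 ≤ 1 / w)
    rwa [← Real.rpow_mul (hd i).le, mul_one_div_cancel h0.ne', Real.rpow_one] at this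
  rw [hM, comp_mul, comp_mul, comp_gpow hX] at e2
  have e3 := core (comp_posDef hX k) (comp_posDef hY k) h0.le h1 (by positivity) e2
  rw [← Real.rpow_mul hcp.le, one_div_mul_cancel h0.ne', Real.rpow_one] at e3
  rwa [comp_mul, comp_mul, comp_gpow hX, comp_gpow hY]

lemma logMaj {X Y : Matrix (Fin n) (Fin n) ℂ} (hX : X.PosDef) (hY : Y.PosDef) {w : ℝ}
    (h0 : 0 < w) (h1 : w ≤ 1) :
    LogMaj (gpow X (w/2) * gpow Y w * gpow X (w/2))
      (gpow (gpow X (1/2) * Y * gpow X (1/2)) w) := by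
  refine ⟨fun k hk => araki hX hY h0 h1 (hk.trans (Nat.sub_le _ _)), ?_⟩
  have hMp : (gpow X (1/2) * Y * gpow X (1/2)).PosDef := conj_posDef (gpow_posDef hX _) hY
  have key : ∀ s t : ℝ, (gpow X (s/2) * gpow Y t * gpow X (s/2)).det =
      ((X.det.re ^ s * Y.det.re ^ t : ℝ) : ℂ) := by
    intro s t
    rw [det_mul_right_comm, gpow_mul hX, det_mul, det_gpow hX, det_gpow hY]
    push_cast
    congr 4
    ring
  have k1 := key 1 1
  rw [gpow_one hY, Real.rpow_one, Real.rpow_one] at k1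
  rw [key, det_gpow hMp, k1, Complex.ofReal_re, Real.mul_rpow]
  · exact (Complex.pos_iff.1 hX.det_pos).1.le
  · exact (Complex.pos_iff.1 hY.det_pos).1.le

end LM

/-- Remark 4.9: for positive definite matrices `A, B`, `a ∈ ℝ` and `-1 ≤ z ≤ 1/2`, `z ≠ 0`,
`A^((1-a)/2) B^a A^((1-a)/2) ≺_log (A^((1-a)/(2z)) B^(a/z) A^((1-a)/(2z)))^z`. -/
theorem stmt_16 (A B : Matrix (Fin n) (Fin n) ℂ) (hA : A.PosDef) (hB : B.PosDef)
    (a z : ℝ) (hz₁ : -1 ≤ z) (hz₂ : z ≤ 1/2) (hz₀ : z ≠ 0) :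
    LogMaj (mPow A ((1 - a) / 2) * mPow B a * mPow A ((1 - a) / 2))
      (mPow (mPow A ((1 - a) / (2 * z)) * mPow B (a / z) * mPow A ((1 - a) / (2 * z))) z) := by
  have e : ∀ (K : Matrix (Fin n) (Fin n) ℂ) (t : ℝ), mPow K t = LM.gpow K t := fun _ _ => rfl
  simp only [e]
  rcases lt_or_gt_of_ne hz₀ with hz | hz
  · have h := LM.logMaj (LM.gpow_posDef hA ((1 - a) / (-z))) (LM.gpow_posDef hB (a / (-z)))
      (w := -z) (by linarith) (by linarith)
    simp only [LM.gpow_gpow hA, LM.gpow_gpow hB] at h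
    have e1 : (1 - a) / (-z) * (-z / 2) = (1 - a) / 2 := by field_simp
    have e2 : a / (-z) * -z = a := by field_simp
    have e3 : (1 - a) / (-z) * (1 / 2) = - ((1 - a) / (2 * z)) := by field_simp
    have e4 : a / (-z) = - (a / z) := by field_simp
    rw [e1, e2, e3, e4] at h
    have hM := LM.conj_posDef (LM.gpow_posDef hA ((1 - a) / (2 * z))) (LM.gpow_posDef hB (a / z))
    have e5 : LM.gpow A (-((1 - a) / (2 * z))) * LM.gpow B (-(a / z)) *
        LM.gpow A (-((1 - a) / (2 * z))) = LM.gpow (LM.gpow A ((1 - a) / (2 * z)) *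
          LM.gpow B (a / z) * LM.gpow A ((1 - a) / (2 * z))) (-1) := by
      rw [LM.gpow_neg_one hM, Matrix.mul_inv_rev, Matrix.mul_inv_rev,
        ← LM.gpow_neg_one (LM.gpow_posDef hA _), ← LM.gpow_neg_one (LM.gpow_posDef hB _),
        LM.gpow_gpow hA, LM.gpow_gpow hB, ← mul_assoc]
      simp only [mul_neg, mul_one]
    rw [e5, LM.gpow_gpow hM] at h
    simpa using h
  · have h := LM.logMaj (LM.gpow_posDef hA ((1 - a) / z)) (LM.gpow_posDef hB (a / z))
      (w := z) hz (by linarith)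
    simp only [LM.gpow_gpow hA, LM.gpow_gpow hB] at h
    have e1 : (1 - a) / z * (z / 2) = (1 - a) / 2 := by field_simp
    have e2 : a / z * z = a := by field_simp
    have e3 : (1 - a) / z * (1 / 2) = (1 - a) / (2 * z) := by field_simp
    rwa [e1, e2, e3] at h
end
end
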